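/- Fix a number field L of degree d over ℚ with ring of integers O_L. There is a constant depending only on L such that for every X ≥ 2 and every real number α having a rational approximation of denominator q: |Σ_{N(𝔞) ≤ X} log(N(𝔞))·e(α·N(𝔞))| = O( X·log(X)·( 1/q + X^{−1/d} + q/X )^{10^{−d}/2} ), the sum running over nonzero ideals 𝔞 of O_L with N(𝔞) ≤ X. -/

import Mathlib

/-!
The sum is reduced to Weyl sums over lines in the lattice of an ideal.

Fix an ideal class and an ideal `J` in the inverse class. The ideals `I` of the class correspond to the
generators `x ∈ J` of `I * J` up to units, with `N(I) = |N(x)| / N(J)`. Each unit orbit contains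
elements for which all conjugates have comparable size (`exists_reduction_units`); the weights
`redWeight` select them with total weight one per orbit (`sum_redWeight_eq_one`). In an integral basis
`b` of `J` the selected `x` with `N(I) ≤ X` have coordinates in a box of side `O(P)`, `P = X ^ (1/d)`.

Slice the box into `O(P ^ (d - 1))` lines in the direction `b 0`. On a line the norm is a polynomial of
degree `d` in the parameter, with leading coefficient `N(b 0)`, an integer multiple of `N(J)`. So, after
splitting according to the sign of the norm, the phase `α |N(x)| / N(J)` is a polynomial whose leading
coefficient is a nonzero integer times `α`. The weight and the condition `|N(x)| ≤ X N(J)` depend only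
on the signs of boundedly many polynomials of bounded degree, hence they are constant on boundedly many
intervals, and partial summation removes them (`norm_weighted_sum_le`, `line_bound`).

What remains is Weyl's inequality with the saving `(1/q + 1/P + q / P ^ d) ^ (10 ^ (-d) / 2)` and no
factor `P ^ ε` (`weyl_poly`). The usual argument collects the products of the shifts and pays a divisor
bound. Here a large Weyl sum is instead turned into a good rational approximation of the leading
coefficient, one differencing step at a time (`exists_distInt_le_of_weylA`), losing only powers of the
saving; this must be compatible with the given approximation of `α`, which bounds the saving below.

Summing over lines (`box_bound`), over the finitely many classes (`ideal_sum_bound`) and by parts in the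
norm to insert the logarithm (`log_ideal_sum_bound`) gives the theorem.
-/

open scoped BigOperators Classical
open NumberField

/-- `e(x) = exp(2πix)`. -/
noncomputable def eF (x : ℝ) : ℂ := Complex.exp (2 * Real.pi * Complex.I * x)

/-- `α` has a rational approximation with denominator `q`: there are relatively prime
integers `a` and `q` with `|α − a/q| < 1/q²`. -/
def HasRatApprox (α : ℝ) (q : ℕ) : Prop :=
  ∃ a : ℤ, Int.gcd a (q : ℤ) = 1 ∧ |α - (a : ℝ) / q| < 1 / (q : ℝ) ^ 2

/-! ### The function `e(x)` and Weyl differencing -/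

lemma eF_add (x y : ℝ) : eF (x + y) = eF x * eF y := by
  simp [eF, ← Complex.exp_add, mul_add]

lemma eF_zero : eF 0 = 1 := by simp [eF]

lemma norm_eF (x : ℝ) : ‖eF x‖ = 1 := by
  rw [eF, show (2 * Real.pi * Complex.I * x : ℂ) = ((2 * Real.pi * x : ℝ) : ℂ) * Complex.I by
    push_cast; ring]
  exact Complex.norm_exp_ofReal_mul_I _

lemma eF_neg (x : ℝ) : eF (-x) = (starRingEnd ℂ) (eF x) := by
  rw [eF, eF, ← Complex.exp_conj]
  congr 1
  simp [Complex.conj_ofNat]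

/-- Distance from a real number to the nearest integer. -/
noncomputable def distInt (x : ℝ) : ℝ := |x - round x|

lemma distInt_nonneg (x : ℝ) : 0 ≤ distInt x := abs_nonneg _

lemma distInt_le (x : ℝ) (z : ℤ) : distInt x ≤ |x - z| := round_le x z

lemma distInt_eq_norm (x : ℝ) : distInt x = ‖(x : UnitAddCircle)‖ := UnitAddCircle.norm_eq.symm

lemma distInt_neg (x : ℝ) : distInt (-x) = distInt x := by
  rw [distInt_eq_norm, distInt_eq_norm]
  simp

lemma eF_natMul (x : ℝ) (n : ℕ) : eF (n * x) = eF x ^ n := by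
  rw [eF, eF, ← Complex.exp_nat_mul]
  congr 1
  push_cast
  ring

/-- Jordan's inequality `2 |θ| / π ≤ |sin θ|` for `|θ| ≤ π / 2`, applied with `θ = π (x - round x)`. -/
lemma four_mul_distInt_le (x : ℝ) : 4 * distInt x ≤ ‖eF x - 1‖ := by
  have h1 : ‖eF x - 1‖ = 2 * |Real.sin (Real.pi * x)| := by
    have : eF x = Complex.exp (Complex.I * ((2 * Real.pi * x : ℝ) : ℂ)) := by
      rw [eF]; congr 1; push_cast; ring
    rw [this, Complex.norm_exp_I_mul_ofReal_sub_one, norm_mul, Real.norm_eq_abs, Real.norm_eq_abs]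
    rw [show 2 * Real.pi * x / 2 = Real.pi * x by ring]
    norm_num
  have h2 : |Real.sin (Real.pi * x)| = |Real.sin (Real.pi * (x - round x))| := by
    rw [show Real.pi * (x - round x) = Real.pi * x - round x * Real.pi by ring,
      Real.sin_sub_int_mul_pi, abs_mul]
    simp [abs_zpow]
  have h3 := abs_sub_round x
  have hpi := Real.pi_pos
  have h4 : |Real.pi * (x - round x)| ≤ Real.pi / 2 := by
    rw [abs_mul, abs_of_pos hpi]
    nlinarith
  have h5 := Real.mul_abs_le_abs_sin h4
  rw [abs_mul, abs_of_pos hpi, show 2 / Real.pi * (Real.pi * |x - round x|) = 2 * |x - round x| by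
    field_simp] at h5
  rw [h1, h2, distInt]
  linarith

/-- The truncated reciprocal `min (M, 1 / ‖β‖)`, where `‖β‖` is the distance to the nearest integer;
written so that it equals `M` when `β` is an integer. -/
noncomputable def recip (M : ℕ) (β : ℝ) : ℝ := (max (M : ℝ)⁻¹ (distInt β))⁻¹

lemma recip_nonneg (M : ℕ) (β : ℝ) : 0 ≤ recip M β :=
  inv_nonneg.mpr (le_max_of_le_right (distInt_nonneg _))

lemma recip_neg (M : ℕ) (β : ℝ) : recip M (-β) = recip M β := by
  rw [recip, recip, distInt_neg]

lemma recip_abs (M : ℕ) (β : ℝ) : recip M |β| = recip M β := by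
  rcases abs_choice β with h | h <;> rw [h]
  exact recip_neg M β

lemma recip_le (M : ℕ) (hM : 1 ≤ M) (β : ℝ) : recip M β ≤ M := by
  have hM' : (0 : ℝ) < M := by exact_mod_cast hM
  rw [recip]
  refine inv_le_of_inv_le₀ hM' (le_max_left _ _)

lemma recip_le_of_le (M : ℕ) (β δ : ℝ) (hδ : 0 < δ) (h : δ ≤ distInt β) : recip M β ≤ 1 / δ := by
  rw [recip, one_div]
  exact inv_anti₀ hδ (h.trans (le_max_right _ _))

lemma le_recip (M : ℕ) (hM : 1 ≤ M) (β s : ℝ) (h1 : s ≤ M) (h2 : s * distInt β ≤ 1) :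
    s ≤ recip M β := by
  have hM' : (0 : ℝ) < M := by exact_mod_cast hM
  have hpos : 0 < max (M : ℝ)⁻¹ (distInt β) := lt_max_of_lt_left (inv_pos.mpr hM')
  rw [recip, ← one_div, le_div_iff₀ hpos]
  rcases max_choice (M : ℝ)⁻¹ (distInt β) with h | h <;> rw [h]
  · rw [← div_eq_mul_inv]; exact (div_le_one hM').mpr h1
  · exact h2

lemma geom_range (β : ℝ) (n : ℕ) :
    ‖∑ t ∈ Finset.range n, eF (t * β)‖ * distInt β ≤ 1 := by
  have h1 : (∑ t ∈ Finset.range n, eF (t * β)) * (eF β - 1) = eF (n * β) - 1 := by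
    simp_rw [eF_natMul]
    exact geom_sum_mul _ _
  have h2 : ‖∑ t ∈ Finset.range n, eF (t * β)‖ * ‖eF β - 1‖ ≤ 2 := by
    rw [← norm_mul, h1]
    calc _ ≤ ‖eF (n * β)‖ + ‖(1 : ℂ)‖ := norm_sub_le _ _
      _ = 2 := by rw [norm_eF]; norm_num
  have h3 := four_mul_distInt_le β
  have h4 := norm_nonneg (∑ t ∈ Finset.range n, eF (t * β))
  nlinarith [distInt_nonneg β]

lemma sum_Ico_int_eq {E : Type*} [AddCommMonoid E] (f : ℤ → E) (a b : ℤ) :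
    ∑ t ∈ Finset.Ico a b, f t = ∑ i ∈ Finset.range (b - a).toNat, f (a + i) := by
  symm
  refine Finset.sum_bij (fun i _ => a + i) ?_ ?_ ?_ ?_
  · intro i hi; simp at hi ⊢; omega
  · intro i _ j _ h; simpa using h
  · intro t ht; simp at ht; exact ⟨(t - a).toNat, by simp; omega, by simp; omega⟩
  · intros; rfl

lemma norm_expsum_le (p : ℤ → ℝ) (a b : ℤ) (M : ℕ) (h : b - a ≤ M) :
    ‖∑ t ∈ Finset.Ico a b, eF (p t)‖ ≤ M := by
  refine (norm_sum_le _ _).trans ?_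
  simp only [norm_eF, Finset.sum_const, Int.card_Ico, nsmul_eq_mul, mul_one]
  exact_mod_cast (by omega : (b - a).toNat ≤ M)

lemma norm_linear_sum_le (β γ : ℝ) (a b : ℤ) (M : ℕ) (hM : 1 ≤ M) (h : b - a ≤ M) :
    ‖∑ t ∈ Finset.Ico a b, eF (γ + β * t)‖ ≤ recip M β := by
  refine le_recip M hM _ _ (norm_expsum_le _ a b M h) ?_
  rw [sum_Ico_int_eq]
  have : ∀ i : ℕ, eF (γ + β * ((a + i : ℤ) : ℝ)) = eF (γ + β * a) * eF (i * β) := by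
    intro i
    rw [← eF_add]
    congr 1
    push_cast
    ring
  simp_rw [this, ← Finset.mul_sum, norm_mul, norm_eF, one_mul]
  exact geom_range _ _

/-- Weyl differencing: the square of an exponential sum is a sum over shifts `h` of exponential
sums with the differenced phase. -/
lemma norm_sq_expsum_le (p : ℤ → ℝ) (a b : ℤ) (M : ℕ) (h : b - a ≤ M) :
    ‖∑ t ∈ Finset.Ico a b, eF (p t)‖ ^ 2 ≤
      ∑ h ∈ Finset.Ioo (-M : ℤ) M,
        ‖∑ t ∈ Finset.Ico (max a (a - h)) (min b (b - h)), eF (p (t + h) - p t)‖ := by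
  have key : (∑ t ∈ Finset.Ico a b, eF (p t)) * (starRingEnd ℂ) (∑ t ∈ Finset.Ico a b, eF (p t))
      = ∑ h ∈ Finset.Ioo (-M : ℤ) M,
        ∑ t ∈ Finset.Ico (max a (a - h)) (min b (b - h)), eF (p (t + h) - p t) := by
    rw [map_sum, Finset.sum_mul_sum, ← Finset.sum_product', Finset.sum_sigma']
    refine Finset.sum_bij' (fun x _ => ⟨x.1 - x.2, x.2⟩) (fun y _ => (y.2 + y.1, y.2)) ?_ ?_ ?_ ?_ ?_
    · rintro ⟨x, y⟩ hx
      simp at hx ⊢; omega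
    · rintro ⟨x, y⟩ hx
      simp at hx ⊢; omega
    · rintro ⟨x, y⟩ hx
      simp
    · rintro ⟨x, y⟩ hx
      simp
    · rintro ⟨x, y⟩ hx
      simp only [add_sub_cancel]
      rw [sub_eq_add_neg, eF_add, eF_neg]
  rw [Complex.mul_conj, Complex.normSq_eq_norm_sq] at key
  calc ‖∑ t ∈ Finset.Ico a b, eF (p t)‖ ^ 2
      = ‖((‖∑ t ∈ Finset.Ico a b, eF (p t)‖ ^ 2 : ℝ) : ℂ)‖ := by
        rw [Complex.norm_real, Real.norm_of_nonneg (by positivity)]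
    _ ≤ _ := by rw [key]; exact norm_sum_le _ _

/-- The iterated sum of truncated reciprocals produced by `k` Weyl differencings of a polynomial
of degree `k + 1` with leading coefficient `β`. -/
noncomputable def weylA : ℕ → ℕ → ℝ → ℝ
  | 0, M, β => recip M β
  | k + 1, M, β => ∑ h ∈ Finset.Ioo (-M : ℤ) M, weylA k M ((k + 2) * β * h)

lemma weylA_nonneg (k M : ℕ) (β : ℝ) : 0 ≤ weylA k M β := by
  induction k generalizing β with
  | zero => exact recip_nonneg _ _
  | succ k ih => exact Finset.sum_nonneg fun h _ => ih _

lemma card_Ioo_neg_le (M : ℕ) : ((Finset.Ioo (-M : ℤ) M).card : ℝ) ≤ 2 * M := by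
  rw [Int.card_Ioo]
  have : ((M : ℤ) - -M - 1).toNat ≤ 2 * M := by omega
  exact_mod_cast this

lemma weylA_le (k M : ℕ) (hM : 1 ≤ M) (β : ℝ) : weylA k M β ≤ (2 * M) ^ k * M := by
  induction k generalizing β with
  | zero => simpa [weylA] using recip_le M hM β
  | succ k ih =>
    calc weylA (k + 1) M β ≤ ∑ h ∈ Finset.Ioo (-M : ℤ) M, ((2 * M : ℝ) ^ k * M) :=
          Finset.sum_le_sum fun h _ => ih _
      _ = (Finset.Ioo (-M : ℤ) M).card * ((2 * M : ℝ) ^ k * M) := by simp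
      _ ≤ (2 * M) * ((2 * M : ℝ) ^ k * M) := by
          gcongr; exact card_Ioo_neg_le M
      _ = _ := by ring

open Polynomial in
/-- Differencing by `h` lowers the degree `k + 2` by one and multiplies the leading coefficient
by `(k + 2) h`. -/
lemma diff_poly (k : ℕ) (p : ℝ[X]) (hp : p.natDegree ≤ k + 2) (h : ℝ) :
    (taylor h p - p).natDegree ≤ k + 1 ∧
      (taylor h p - p).coeff (k + 1) = (k + 2) * p.coeff (k + 2) * h := by
  constructor
  · rw [natDegree_le_iff_coeff_eq_zero]
    intro N hN
    rcases eq_or_lt_of_le (show k + 2 ≤ N by omega) with h1 | h1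
    · rw [coeff_sub, taylor_coeff]
      have : (hasseDeriv N p).natDegree ≤ 0 := by
        refine (natDegree_hasseDeriv_le p N).trans (by omega)
      rw [eq_C_of_natDegree_le_zero this, hasseDeriv_coeff]
      simp
    · rw [coeff_sub, coeff_eq_zero_of_natDegree_lt (by rw [natDegree_taylor]; omega),
        coeff_eq_zero_of_natDegree_lt (by omega), sub_zero]
  · rw [coeff_sub, taylor_coeff]
    have : (hasseDeriv (k + 1) p).natDegree ≤ 1 := by
      refine (natDegree_hasseDeriv_le p _).trans (by omega)
    rw [eq_X_add_C_of_natDegree_le_one this, hasseDeriv_coeff, hasseDeriv_coeff]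
    have h2 : (1 + (k + 1)).choose (k + 1) = k + 2 := by
      rw [add_comm 1, Nat.choose_succ_self_right]
    simp only [h2, zero_add, Nat.choose_self, Nat.cast_one, one_mul, eval_add, eval_mul, eval_C,
      eval_X]
    push_cast
    rw [show 1 + (k + 1) = k + 2 by ring]
    ring

open Polynomial in
/-- Weyl's inequality before the resulting reciprocal sum is estimated: `k` differencings, with
Hölder's inequality applied to the sum over shifts at each of them. -/
lemma weyl_pow_le (k : ℕ) (p : ℝ[X]) (hp : p.natDegree ≤ k + 1) (a b : ℤ) (M : ℕ) (hM : 1 ≤ M)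
    (hab : b - a ≤ M) :
    ‖∑ t ∈ Finset.Ico a b, eF (p.eval (t : ℝ))‖ ^ (2 ^ k) ≤
      (2 * M : ℝ) ^ (2 ^ k - k - 1) * weylA k M (p.coeff (k + 1)) := by
  induction k generalizing p a b with
  | zero =>
    simp only [pow_zero, pow_one, weylA, zero_add, Nat.sub_zero, Nat.sub_self, one_mul]
    have : ∀ t : ℤ, p.eval (t : ℝ) = p.coeff 0 + p.coeff 1 * t := by
      intro t
      conv_lhs => rw [eq_X_add_C_of_natDegree_le_one hp]
      simp only [eval_add, eval_mul, eval_C, eval_X]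
      ring
    simp_rw [this]
    exact norm_linear_sum_le _ _ a b M hM hab
  | succ k ih =>
    have hM0 : (0 : ℝ) ≤ M := Nat.cast_nonneg _
    have hpos : 1 ≤ 2 ^ k := Nat.one_le_two_pow
    set S := ‖∑ t ∈ Finset.Ico a b, eF (p.eval (t : ℝ))‖
    set U : ℤ → ℝ := fun h =>
      ‖∑ t ∈ Finset.Ico (max a (a - h)) (min b (b - h)),
        eF (p.eval ((t + h : ℤ) : ℝ) - p.eval (t : ℝ))‖ with hU
    have h1 : S ^ 2 ≤ ∑ h ∈ Finset.Ioo (-M : ℤ) M, U h :=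
      norm_sq_expsum_le (fun t => p.eval (t : ℝ)) a b M hab
    have h2 : ∀ h, U h ^ (2 ^ k) ≤
        (2 * M : ℝ) ^ (2 ^ k - k - 1) * weylA k M ((k + 2) * p.coeff (k + 2) * h) := by
      intro h
      obtain ⟨d1, d2⟩ := diff_poly k p hp h
      have := ih (taylor (h : ℝ) p - p) d1 (max a (a - h)) (min b (b - h)) (by omega)
      rw [d2] at this
      convert this using 5
      simp [taylor_eval, add_comm]
    have h3 : (∑ h ∈ Finset.Ioo (-M : ℤ) M, U h) ^ (2 ^ k) ≤
        (2 * M : ℝ) ^ (2 ^ k - 1) * ∑ h ∈ Finset.Ioo (-M : ℤ) M, U h ^ (2 ^ k) := by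
      have hc : (0 : ℝ) < ((Finset.Ioo (-M : ℤ) M).card : ℝ) := by
        have : 0 < (Finset.Ioo (-M : ℤ) M).card :=
          Finset.card_pos.mpr ⟨0, by simp; omega⟩
        exact_mod_cast this
      have := pow_sum_div_card_le_sum_pow (s := Finset.Ioo (-M : ℤ) M) (f := U)
        (n := 2 ^ k - 1) (fun h _ => norm_nonneg _)
      rw [Nat.sub_add_cancel hpos, div_le_iff₀ (by positivity), mul_comm] at this
      refine this.trans ?_
      gcongr
      exact card_Ioo_neg_le M
    calc S ^ (2 ^ (k + 1)) = (S ^ 2) ^ (2 ^ k) := by rw [← pow_mul, pow_succ']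
      _ ≤ (∑ h ∈ Finset.Ioo (-M : ℤ) M, U h) ^ (2 ^ k) := by gcongr
      _ ≤ _ := h3
      _ ≤ (2 * M : ℝ) ^ (2 ^ k - 1) * ∑ h ∈ Finset.Ioo (-M : ℤ) M,
          (2 * M : ℝ) ^ (2 ^ k - k - 1) * weylA k M ((k + 2) * p.coeff (k + 2) * h) := by
        gcongr with h _
        exact h2 h
      _ = _ := by
        rw [← Finset.mul_sum, ← mul_assoc, ← pow_add]
        have : k < 2 ^ k := Nat.lt_two_pow_self
        have e : 2 ^ k - 1 + (2 ^ k - k - 1) = 2 ^ (k + 1) - (k + 1) - 1 := by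
          rw [pow_succ]; omega
        rw [e]
        rfl

/-! ### Diophantine approximation -/

lemma HasRatApprox.pos {α : ℝ} {q : ℕ} (h : HasRatApprox α q) : 0 < q := by
  obtain ⟨a, _, h2⟩ := h
  rcases Nat.eq_zero_or_pos q with rfl | h0
  · simp at h2
    exact absurd h2 (not_lt.mpr (abs_nonneg _))
  · exact h0

/-- Multiples of `α` by nonzero integers below `q / 2` stay away from the integers. -/
lemma HasRatApprox.distInt_ge {α : ℝ} {q : ℕ} (h : HasRatApprox α q) (n : ℤ) (hn : n ≠ 0)
    (hnq : 2 * |n| < q) : 1 / (2 * q : ℝ) ≤ distInt (α * n) := by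
  have hq := h.pos
  obtain ⟨a, hg, ha⟩ := h
  have hq' : (0 : ℝ) < q := by exact_mod_cast hq
  set z := round (α * n)
  have hne : a * n - z * q ≠ 0 := by
    intro h0
    have h1 : (q : ℤ) ∣ a * n := ⟨z, by linarith⟩
    have h2 : (q : ℤ) ∣ n := by
      refine IsCoprime.dvd_of_dvd_mul_left ?_ h1
      rw [Int.isCoprime_iff_gcd_eq_one, Int.gcd_comm]
      exact hg
    have := Int.le_of_dvd (abs_pos.mpr hn) ((dvd_abs _ _).mpr h2)
    have := abs_pos.mpr hn
    omega
  have h1 : (1 : ℝ) ≤ |(a * n - z * q : ℝ)| := by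
    have := Int.one_le_abs hne
    exact_mod_cast this
  have h2 : |(a * n - z * q : ℝ)| ≤ q * distInt (α * n) + |(n : ℝ)| / q := by
    have e : (a * n - z * q : ℝ) = q * (α * n - z) - q * n * (α - a / q) := by
      field_simp
      ring
    rw [e]
    refine (abs_sub _ _).trans ?_
    rw [abs_mul, abs_mul, abs_mul, abs_of_pos hq', distInt]
    gcongr
    calc (q : ℝ) * |(n : ℝ)| * |α - a / q| ≤ q * |(n : ℝ)| * (1 / q ^ 2) := by gcongr
      _ = _ := by field_simp
  have h3 : |(n : ℝ)| / q ≤ 1 / 2 := by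
    rw [div_le_iff₀ hq', ← Int.cast_abs]
    have : (2 * (|n| : ℤ) : ℝ) ≤ q := by exact_mod_cast hnq.le
    linarith
  rw [div_le_iff₀ (by positivity)]
  linarith

/-- If `‖γ h‖ ≤ ε` for a proportion `1 / D` of the integers `|h| < M`, and `ε D` is small, then `γ` is
within `O(ε D / M)` of a rational with denominator `O(D)`. -/
lemma exists_mul_distInt_le (γ ε D : ℝ) (M : ℕ) (hM : 1 ≤ M) (H : Finset ℤ)
    (hH : H ⊆ Finset.Ioo (-M : ℤ) M) (hε : ∀ h ∈ H, distInt (γ * h) ≤ ε)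
    (hcard : (M : ℝ) ≤ H.card * D) (hD : 1 ≤ D) (hMD : 2 * D ≤ M) (hεD : 240 * (ε * D) < 1)
    (hε0 : 0 ≤ ε) :
    ∃ m : ℕ, 1 ≤ m ∧ (m : ℝ) ≤ 4 * D ∧ distInt (γ * m) * M ≤ 4 * D * ε := by
  have hM0 : (0 : ℝ) < M := by exact_mod_cast hM
  -- Dirichlet approximation with denominators up to `16 M`
  obtain ⟨r, hr1, hr2⟩ := Real.exists_rat_abs_sub_le_and_den_le γ (n := 16 * M) (by omega)
  set q := r.den with hq
  have hq0 : 0 < q := r.den_pos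
  have hq0' : (0 : ℝ) < q := by exact_mod_cast hq0
  have hqM : (q : ℝ) ≤ 16 * M := by exact_mod_cast hr2
  have hr : (r : ℝ) = (r.num : ℝ) / q := Rat.cast_def r
  rw [hr] at hr1
  push_cast at hr1
  have happ : HasRatApprox γ q := by
    refine ⟨r.num, ?_, hr1.trans_lt ?_⟩
    · rw [Int.gcd, Int.natAbs_natCast]; exact r.reduced
    · apply one_div_lt_one_div_of_lt (by positivity)
      nlinarith
  have hclose : |γ * q - r.num| * (16 * M) ≤ 1 := by
    have e : γ * q - r.num = q * (γ - r.num / q) := by field_simp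
    rw [e, abs_mul, abs_of_pos hq0']
    calc (q : ℝ) * |γ - r.num / q| * (16 * M) ≤ q * (1 / ((16 * M + 1) * q)) * (16 * M) := by gcongr
      _ = 16 * M / (16 * M + 1) := by field_simp
      _ ≤ 1 := by rw [div_le_one (by positivity)]; linarith
  set ϑ := γ * q - r.num with hϑ
  by_cases hεq : 1 / 8 ≤ ε * q
  · -- then `H` has `O(ε M)` elements, by the spacing of the multiples of `γ`
    exfalso
    set B := (q + 1) / 2 with hB
    have hBpos : 0 < B := by omega
    have hqB : (q : ℝ) ≤ 2 * B := by exact_mod_cast (by omega : q ≤ 2 * B)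
    have hblock : ∀ u : ℤ, ((H.filter (fun h => (h + M) / B = u)).card : ℝ) ≤ 12 * (ε * q) := by
      intro u
      -- inside a block of length `B` the values `γ h` modulo `1` are `1 / (2 q)`-spaced, and they lie
      -- in an interval of length `2 ε`
      have h1 : (H.filter (fun h => (h + M) / B = u)).card ≤
          (Finset.range (⌊4 * (ε * q)⌋₊ + 1)).card := by
        refine Finset.card_le_card_of_injOn
          (fun h => ⌊2 * q * (γ * h - round (γ * h) + ε)⌋₊) ?_ ?_
        · intro h hh
          have hh' := hε h (Finset.mem_filter.mp hh).1
          rw [distInt, abs_le] at hh'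
          simp only [Finset.coe_range, Set.mem_Iio, Nat.lt_succ_iff]
          refine Nat.floor_le_floor ?_
          nlinarith
        · intro h hh h' hh' he
          simp only [Finset.coe_filter, Set.mem_ofPred_eq] at hh hh'
          by_contra hne
          have hBz : (0 : ℤ) < B := by exact_mod_cast hBpos
          have e1 := Int.emod_add_mul_ediv (h + M) B
          have e2 := Int.emod_add_mul_ediv (h' + M) B
          have e3 := Int.emod_nonneg (h + M) hBz.ne'
          have e4 := Int.emod_nonneg (h' + M) hBz.ne'
          have e5 := Int.emod_lt_of_pos (h + M) hBz
          have e6 := Int.emod_lt_of_pos (h' + M) hBz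
          rw [hh.2] at e1
          rw [hh'.2] at e2
          have h1 := happ.distInt_ge (h - h') (by omega)
            (by rcases abs_choice (h - h') with h | h <;> rw [h] <;> omega)
          have h2 : distInt (γ * (h - h' : ℤ)) ≤
              |(γ * h - round (γ * h)) - (γ * h' - round (γ * h'))| := by
            refine (distInt_le _ (round (γ * h) - round (γ * h'))).trans_eq ?_
            congr 1
            push_cast
            ring
          have f1 := hε h hh.1
          have f2 := hε h' hh'.1
          rw [distInt, abs_le] at f1 f2
          have h3 := h1.trans h2
          rw [div_le_iff₀ (by positivity)] at h3
          set x := γ * h - round (γ * h)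
          set y := γ * h' - round (γ * h')
          have g1 := Nat.floor_le (show 0 ≤ 2 * q * (x + ε) by
            have : 0 ≤ x + ε := by linarith
            positivity)
          have g2 := Nat.lt_floor_add_one (2 * q * (x + ε))
          have g3 := Nat.floor_le (show 0 ≤ 2 * q * (y + ε) by
            have : 0 ≤ y + ε := by linarith
            positivity)
          have g4 := Nat.lt_floor_add_one (2 * q * (y + ε))
          simp only at he
          rw [he] at g1 g2
          have h4 : |x - y| * (2 * q) < 1 := by
            rw [← abs_of_pos (show (0 : ℝ) < 2 * q by positivity), ← abs_mul, abs_lt]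
            constructor <;> nlinarith
          linarith
      rw [Finset.card_range] at h1
      calc ((H.filter (fun h => (h + M) / B = u)).card : ℝ) ≤ (⌊4 * (ε * q)⌋₊ + 1 : ℕ) := by
            exact_mod_cast h1
        _ ≤ 4 * (ε * q) + 1 := by
            push_cast
            gcongr
            exact Nat.floor_le (by positivity)
        _ ≤ _ := by linarith
    have hmaps : ∀ h ∈ H, (h + M) / B ∈ Finset.Ico (0 : ℤ) (2 * M / B + 1 : ℕ) := by
      intro h hh
      have := Finset.mem_Ioo.mp (hH hh)
      rw [Finset.mem_Ico]
      have hBz : (0 : ℤ) < B := by exact_mod_cast hBpos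
      refine ⟨Int.ediv_nonneg (by omega) hBz.le, ?_⟩
      push_cast
      have : (h + M) / B ≤ (2 * M : ℤ) / B := Int.ediv_le_ediv hBz (by omega)
      omega
    have hc : (H.card : ℝ) ≤ (2 * M / B + 1 : ℕ) * (12 * (ε * q)) := by
      rw [Finset.card_eq_sum_card_fiberwise hmaps, Nat.cast_sum]
      refine (Finset.sum_le_sum fun u _ => hblock u).trans ?_
      rw [Finset.sum_const, Int.card_Ico, nsmul_eq_mul, sub_zero, Int.toNat_natCast]
    have hc2 : ((2 * M / B + 1 : ℕ) : ℝ) * q ≤ 18 * M + 2 * M := by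
      have : ((2 * M / B : ℕ) : ℝ) * q ≤ 4 * M := by
        calc ((2 * M / B : ℕ) : ℝ) * q ≤ ((2 * M / B : ℕ) : ℝ) * (2 * B) := by gcongr
          _ = 2 * ((2 * M / B * B : ℕ) : ℝ) := by push_cast; ring
          _ ≤ 2 * ((2 * M : ℕ) : ℝ) := by
            have := Nat.div_mul_le_self (2 * M) B
            have : ((2 * M / B * B : ℕ) : ℝ) ≤ ((2 * M : ℕ) : ℝ) := by exact_mod_cast this
            linarith
          _ = _ := by push_cast; ring
      push_cast
      nlinarith
    have hbad : (M : ℝ) ≤ 240 * (ε * D) * M := by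
      calc (M : ℝ) ≤ H.card * D := hcard
        _ ≤ (2 * M / B + 1 : ℕ) * (12 * (ε * q)) * D := by gcongr
        _ = ((2 * M / B + 1 : ℕ) * q) * (12 * (ε * D)) := by ring
        _ ≤ (18 * M + 2 * M) * (12 * (ε * D)) := by gcongr
        _ = _ := by ring
    nlinarith
  · push Not at hεq
    -- for `ε q < 1 / 8`, an `h ∈ H` with `q ∤ h` would have `‖γ h‖ ≥ 1 / q - 1 / (16 q) > ε`, so `H`
    -- consists of multiples of `q`; counting these gives `q ≪ D`, and any of them of size at least
    -- a constant times `M / D` forces `‖γ q‖` to be small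
    have hdvd : ∀ h ∈ H, (q : ℤ) ∣ h := by
      intro h hh
      have h1 := hε h hh
      rw [distInt] at h1
      set z := round (γ * h)
      have hhM := Finset.mem_Ioo.mp (hH hh)
      have hhM' : |(h : ℝ)| ≤ M := by
        rw [abs_le]
        constructor <;> [exact_mod_cast hhM.1.le; exact_mod_cast hhM.2.le]
      have h2 : |((r.num * h - z * q : ℤ) : ℝ)| < 1 := by
        have e : ((r.num * h - z * q : ℤ) : ℝ) = q * (γ * h - z) - h * ϑ := by
          rw [hϑ]; push_cast; ring
        rw [e]
        refine (abs_sub _ _).trans_lt ?_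
        rw [abs_mul, abs_mul, abs_of_pos hq0']
        have : |(h : ℝ)| * |ϑ| ≤ 1 / 16 := by
          calc |(h : ℝ)| * |ϑ| ≤ M * |ϑ| := by gcongr
            _ ≤ _ := by linarith
        nlinarith
      have h3 : r.num * h - z * q = 0 := by
        rw [← Int.cast_abs] at h2
        exact Int.abs_lt_one_iff.mp (by exact_mod_cast h2)
      have h4 : (q : ℤ) ∣ r.num * h := ⟨z, by linarith⟩
      refine IsCoprime.dvd_of_dvd_mul_left ?_ h4
      rw [Int.isCoprime_iff_gcd_eq_one, Int.gcd_comm, Int.gcd, Int.natAbs_natCast]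
      exact r.reduced
    -- the quotients `h / q` lie in an interval of length `2 V + 1`
    have hcardV : ∀ V : ℕ, (∀ h ∈ H, |h / q| ≤ V) → (H.card : ℝ) ≤ 2 * V + 1 := by
      intro V hV
      have : H.card ≤ (Finset.Icc (-V : ℤ) V).card := by
        refine Finset.card_le_card_of_injOn (fun h => h / q) ?_ ?_
        · intro h hh
          have := abs_le.mp (hV h hh)
          simpa using this
        · intro h hh h' hh' he
          simp only at he
          rw [← Int.ediv_mul_cancel (hdvd h hh), he, Int.ediv_mul_cancel (hdvd h' hh')]
      rw [Int.card_Icc] at this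
      exact_mod_cast (by omega : H.card ≤ 2 * V + 1)
    have hcard2 : (M : ℝ) ≤ 2 * ((H.card : ℝ) - 1) * D := by nlinarith
    have hHne : H.Nonempty := by
      rw [Finset.nonempty_iff_ne_empty]
      rintro rfl
      simp at hcard
      omega
    obtain ⟨h₁, hh₁, hmax⟩ := Finset.exists_max_image H (fun h => |h / q|) hHne
    set u := h₁ / q with hu
    have hu1 : h₁ = q * u := by rw [hu, Int.mul_ediv_cancel' (hdvd _ hh₁)]
    have hVu := hcardV u.natAbs (fun h hh => by
      have := hmax h hh
      simpa using this)
    rw [Nat.cast_natAbs, Int.cast_abs] at hVu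
    have hMu : (M : ℝ) ≤ 4 * D * |(u : ℝ)| := by nlinarith
    have huq : |(u : ℝ)| * q ≤ M := by
      have hhM := Finset.mem_Ioo.mp (hH hh₁)
      have : |(h₁ : ℝ)| ≤ M := by
        rw [abs_le]
        constructor <;> [exact_mod_cast hhM.1.le; exact_mod_cast hhM.2.le]
      rw [hu1] at this
      push_cast at this
      rw [abs_mul, abs_of_pos hq0'] at this
      linarith
    have hupos : 0 < |(u : ℝ)| := by
      by_contra hn
      have : |(u : ℝ)| = 0 := le_antisymm (not_lt.mp hn) (abs_nonneg _)
      rw [this] at hMu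
      linarith
    refine ⟨q, hq0, ?_, ?_⟩
    · have : |(u : ℝ)| * q ≤ |(u : ℝ)| * (4 * D) := by linarith
      exact le_of_mul_le_mul_left this hupos
    · have h1 := hε h₁ hh₁
      have h2 : |(u : ℝ) * ϑ| ≤ ε := by
        have hlt : |(u : ℝ) * ϑ| < 1 / 2 := by
          rw [abs_mul]
          have : |(u : ℝ)| ≤ M := by
            have : (1 : ℝ) ≤ q := by exact_mod_cast hq0
            nlinarith
          have : |(u : ℝ)| * |ϑ| ≤ M * |ϑ| := by gcongr
          linarith
        have e : distInt (γ * h₁) = |(u : ℝ) * ϑ| := by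
          have e1 : γ * h₁ = u * ϑ + (u * r.num : ℤ) := by
            rw [hu1, hϑ]; push_cast; ring
          rw [e1, distInt, round_add_intCast]
          have e2 : round ((u : ℝ) * ϑ) = 0 := by
            rw [round_eq_zero_iff]
            rw [abs_lt] at hlt
            exact ⟨by linarith [hlt.1], hlt.2⟩
          rw [e2]
          push_cast
          congr 1
          ring
        rw [← e]; exact h1
      rw [abs_mul] at h2
      calc distInt (γ * q) * M ≤ |ϑ| * M := by
            gcongr
            exact distInt_le _ r.num
        _ ≤ |ϑ| * (4 * D * |(u : ℝ)|) := by gcongr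
        _ = 4 * D * (|(u : ℝ)| * |ϑ|) := by ring
        _ ≤ _ := by gcongr

/-! ### Large reciprocal sums and Weyl's inequality -/

lemma distInt_le_half (x : ℝ) : distInt x ≤ 1 / 2 := abs_sub_round x

lemma pow_exp_le (k : ℕ) : 2 ^ k * (k + 2) ≤ 2 * 5 ^ (k + 1) := by
  induction k with
  | zero => norm_num
  | succ k ih =>
    rw [pow_succ 5, pow_succ 2]
    have : 2 ^ k * 1 ≤ 2 ^ k * (k + 2) := Nat.mul_le_mul_left _ (by omega)
    nlinarith

set_option maxHeartbeats 800000 in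
/-- If the reciprocal sum is within a factor `D` of its trivial bound, then `β` is very well
approximable: some `n ≪ D ^ (2 ^ k - 1)` satisfies `‖β n‖ ≪ D ^ (2 * 5 ^ k) / M ^ (k + 1)`.

By induction on `k`: for a proportion `1 / D` of the shifts `h` the inner sum is within `2 D` of its
trivial bound, so `(k + 2) β h` is well approximable. By pigeonhole a common denominator serves a
proportion of them that is a negative power of `D`, and `exists_mul_distInt_le` transfers the
approximation from the multiples `h` to the number itself. Only powers of `D` are lost, whereas
counting the representations of an integer as a product of shifts would cost a divisor bound and
with it a factor `M ^ ε`. -/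
lemma exists_distInt_le_of_weylA (k : ℕ) : ∃ C : ℝ, 1 ≤ C ∧ ∀ (M : ℕ) (β D : ℝ), 1 ≤ M → 1 ≤ D →
    (2 * M : ℝ) ^ k * M ≤ weylA k M β * D →
    ∃ n : ℕ, 1 ≤ n ∧ (n : ℝ) ≤ C * D ^ (2 ^ k - 1) ∧
      distInt (β * n) * (M : ℝ) ^ (k + 1) ≤ C * D ^ (2 * 5 ^ k) := by
  induction k with
  | zero =>
    refine ⟨1, le_rfl, fun M β D hM hD h => ⟨1, le_rfl, by simp, ?_⟩⟩
    have hM0 : (0 : ℝ) < M := by exact_mod_cast hM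
    simp only [pow_zero, one_mul, weylA, recip] at h
    have hpos : 0 < max (M : ℝ)⁻¹ (distInt β) := lt_max_of_lt_left (by positivity)
    rw [inv_mul_eq_div, le_div_iff₀ hpos] at h
    have h2 : (M : ℝ) * distInt β ≤ D :=
      (mul_le_mul_of_nonneg_left (le_max_right _ _) hM0.le).trans h
    simp only [Nat.cast_one, mul_one, zero_add, pow_one, pow_zero, one_mul]
    nlinarith
  | succ k ih =>
    obtain ⟨C, hC, ih⟩ := ih
    set E : ℝ := C * 2 ^ (2 * 5 ^ k) with hE
    have hE1 : 1 ≤ E := by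
      have : (1 : ℝ) ≤ 2 ^ (2 * 5 ^ k) := one_le_pow₀ (by norm_num)
      nlinarith
    have h25 : 2 ^ k ≤ 5 ^ k := Nat.pow_le_pow_left (by norm_num) k
    have hk2 : k < 2 ^ k := Nat.lt_two_pow_self
    obtain ⟨K, hK0, hK1, hK2, hK3, hK4⟩ : ∃ K : ℝ, 1 ≤ K ∧ 4 * E ^ 2 ≤ K ∧
        4 * (k + 2) * E ^ 2 ≤ K ∧ (2 * E) ^ (k + 2) ≤ K ∧ (240 * E ^ 2) ^ 2 ≤ K := by
      have e1 : 1 ≤ E ^ 2 := one_le_pow₀ hE1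
      have e2 : 0 ≤ (2 * E) ^ (k + 2) := by positivity
      have e3 : 0 ≤ k * E ^ 2 := by positivity
      have e4 : 0 ≤ (240 * E ^ 2) ^ 2 := by positivity
      refine ⟨4 * (k + 2) * E ^ 2 + (2 * E) ^ (k + 2) + (240 * E ^ 2) ^ 2, ?_, ?_, ?_, ?_, ?_⟩ <;>
        linarith
    refine ⟨K, hK0, ?_⟩
    intro M β D hM hD h
    have hM0 : (0 : ℝ) < M := by exact_mod_cast hM
    have hM1 : (1 : ℝ) ≤ M := by exact_mod_cast hM
    have hD0 : 0 < D := by linarith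
    have hDpow : ∀ {i j : ℕ}, i ≤ j → D ^ i ≤ D ^ j := fun hij => pow_le_pow_right₀ hD hij
    have hD1 : ∀ i : ℕ, 1 ≤ D ^ i := fun i => one_le_pow₀ hD
    set W : ℝ := (2 * M : ℝ) ^ k * M with hW
    have hW0 : 0 < W := by positivity
    set w : ℤ → ℝ := fun h => weylA k M ((k + 2) * β * h) with hw
    have hsum : weylA (k + 1) M β = ∑ h ∈ Finset.Ioo (-M : ℤ) M, w h := rfl
    set G := (Finset.Ioo (-M : ℤ) M).filter (fun h => W ≤ w h * (2 * D)) with hG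
    have hGcard : (M : ℝ) ≤ G.card * D := by
      have h1 : ∑ h ∈ Finset.Ioo (-M : ℤ) M, w h ≤ G.card * W + 2 * M * (W / (2 * D)) := by
        rw [← Finset.sum_filter_add_sum_filter_not _ (fun h => W ≤ w h * (2 * D))]
        refine add_le_add ?_ ?_
        · refine (Finset.sum_le_card_nsmul _ _ W fun x _ => weylA_le k M hM _).trans_eq ?_
          rw [nsmul_eq_mul]
        · refine (Finset.sum_le_card_nsmul _ _ (W / (2 * D)) fun x hx => ?_).trans ?_
          · rw [le_div_iff₀ (by positivity)]
            exact (not_le.mp (Finset.mem_filter.mp hx).2).le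
          · rw [nsmul_eq_mul]
            gcongr
            refine le_trans ?_ (card_Ioo_neg_le M)
            exact_mod_cast Finset.card_filter_le _ _
      rw [hsum] at h
      have h2 : 2 * M * W ≤ (G.card * W + 2 * M * (W / (2 * D))) * D := by
        calc 2 * M * W = (2 * M : ℝ) ^ (k + 1) * M := by rw [hW, pow_succ]; ring
          _ ≤ _ := h
          _ ≤ _ := by gcongr
      have h3 : (G.card * W + 2 * M * (W / (2 * D))) * D = G.card * D * W + M * W := by
        field_simp
      rw [h3] at h2
      have h4 : M * W ≤ G.card * D * W := by linarith
      exact le_of_mul_le_mul_right h4 hW0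
    -- a common denominator for a large part of `G`
    set N := ⌊C * (2 * D) ^ (2 ^ k - 1)⌋₊ with hN
    have hNle : (N : ℝ) ≤ E * D ^ (2 ^ k - 1) := by
      refine (Nat.floor_le (by positivity)).trans ?_
      rw [mul_pow, hE, mul_assoc]
      gcongr
      · norm_num
      · omega
    have hex : ∀ h ∈ G, ∃ n : ℕ, n ∈ Finset.Icc 1 N ∧
        distInt ((k + 2) * β * h * n) * (M : ℝ) ^ (k + 1) ≤ E * D ^ (2 * 5 ^ k) := by
      intro h hh
      obtain ⟨n, hn1, hn2, hn3⟩ := ih M ((k + 2) * β * h) (2 * D) hM (by linarith)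
        (Finset.mem_filter.mp hh).2
      refine ⟨n, Finset.mem_Icc.mpr ⟨hn1, Nat.le_floor hn2⟩, hn3.trans_eq ?_⟩
      rw [hE, mul_pow]
      ring
    choose! ν hν1 hν2 using hex
    have hpig : ∃ n ∈ Finset.Icc 1 N, G.card ≤ (G.filter (fun h => ν h = n)).card * N := by
      have hGne : G.Nonempty := by
        rw [Finset.nonempty_iff_ne_empty]
        intro h0
        rw [h0] at hGcard
        simp at hGcard
        omega
      have hNne : (Finset.Icc 1 N).Nonempty := ⟨_, hν1 _ hGne.choose_spec⟩
      have := Finset.exists_le_card_fiber_of_nsmul_le_card_of_maps_to (b := (G.card : ℝ) / N) hν1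
        hNne (by
          rw [nsmul_eq_mul, Nat.card_Icc, Nat.add_sub_cancel]
          rcases Nat.eq_zero_or_pos N with h0 | h0
          · simp [h0]
          · have : (N : ℝ) ≠ 0 := by exact_mod_cast h0.ne'
            rw [mul_div_cancel₀ _ this])
      obtain ⟨n, hn, hn2⟩ := this
      refine ⟨n, hn, ?_⟩
      have hN0 : (0 : ℝ) < N := by
        have := Finset.mem_Icc.mp hn
        exact_mod_cast (by omega : 0 < N)
      rw [div_le_iff₀ hN0] at hn2
      exact_mod_cast hn2
    obtain ⟨n, hn, hncard⟩ := hpig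
    obtain ⟨hn1, hnN⟩ := Finset.mem_Icc.mp hn
    set H := G.filter (fun h => ν h = n) with hH
    set D' := E * D ^ (2 ^ k) with hD'
    have hD'1 : 1 ≤ D' := by
      have := hD1 (2 ^ k)
      nlinarith
    set ε := E * D ^ (2 * 5 ^ k) / (M : ℝ) ^ (k + 1) with hε
    have hε0 : 0 ≤ ε := by positivity
    have hεM : ε * (M : ℝ) ^ (k + 1) = E * D ^ (2 * 5 ^ k) := by
      rw [hε]; field_simp
    have hnE : (n : ℝ) ≤ E * D ^ (2 ^ k - 1) := le_trans (by exact_mod_cast hnN) hNle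
    have hp1 : 2 ^ (k + 1) = 2 ^ k + 2 ^ k := by rw [pow_succ]; ring
    have hp2 : 2 * 5 ^ (k + 1) = 10 * 5 ^ k := by rw [pow_succ]; ring
    have hHcard : (M : ℝ) ≤ H.card * D' := by
      have e1 : (G.card : ℝ) ≤ H.card * N := by exact_mod_cast hncard
      calc (M : ℝ) ≤ G.card * D := hGcard
        _ ≤ H.card * N * D := by gcongr
        _ ≤ H.card * (E * D ^ (2 ^ k - 1)) * D := by gcongr
        _ = H.card * (E * D ^ (2 ^ k - 1 + 1)) := by rw [pow_succ]; ring
        _ = _ := by rw [hD', Nat.sub_add_cancel (by omega)]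
    have hHε : ∀ h ∈ H, distInt ((k + 2) * β * n * h) ≤ ε := by
      intro h hh
      obtain ⟨hhG, hhn⟩ := Finset.mem_filter.mp hh
      have := hν2 h hhG
      rw [hhn] at this
      rw [hε, le_div_iff₀ (by positivity)]
      have e : (k + 2) * β * n * h = (k + 2) * β * h * (n : ℝ) := by ring
      rw [e]
      exact this
    -- if `M` is bounded by a power of `D`, here or when `hc2` below fails, then `n = 1` works
    by_cases hc1 : (M : ℝ) < 2 * D'
    · refine ⟨1, le_rfl, ?_, ?_⟩
      · rw [Nat.cast_one]
        exact one_le_mul_of_one_le_of_one_le hK0 (hD1 _)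
      · have hd2 : distInt (β * (1 : ℕ)) ≤ 1 := (distInt_le_half _).trans (by norm_num)
        calc distInt (β * (1 : ℕ)) * (M : ℝ) ^ (k + 1 + 1) ≤ 1 * (2 * D') ^ (k + 1 + 1) := by gcongr
          _ = (2 * E) ^ (k + 2) * D ^ (2 ^ k * (k + 2)) := by
            rw [hD', one_mul, ← mul_assoc, mul_pow, ← pow_mul]
          _ ≤ K * D ^ (2 * 5 ^ (k + 1)) :=
            mul_le_mul hK3 (hDpow (pow_exp_le k)) (by positivity) (by positivity)
    by_cases hc2 : 240 * (ε * D') < 1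
    · obtain ⟨m, hm1, hm2, hm3⟩ := exists_mul_distInt_le ((k + 2) * β * n) ε D' M hM H
        ((Finset.filter_subset _ _).trans (Finset.filter_subset _ _)) hHε hHcard hD'1
        (not_lt.mp hc1) hc2 hε0
      refine ⟨m * n * (k + 2), ?_, ?_, ?_⟩
      · have : 0 < m * n * (k + 2) := by positivity
        omega
      · push_cast
        calc (m : ℝ) * n * (k + 2) ≤ (4 * D') * (E * D ^ (2 ^ k - 1)) * (k + 2) := by gcongr
          _ = 4 * (k + 2) * E ^ 2 * D ^ (2 ^ k + (2 ^ k - 1)) := by rw [hD', pow_add]; ring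
          _ = 4 * (k + 2) * E ^ 2 * D ^ (2 ^ (k + 1) - 1) := by
            congr 2
            omega
          _ ≤ _ := by gcongr
      · have e1 : β * ((m * n * (k + 2) : ℕ) : ℝ) = (k + 2) * β * n * m := by push_cast; ring
        rw [e1]
        calc distInt ((k + 2) * β * n * m) * (M : ℝ) ^ (k + 1 + 1)
            = distInt ((k + 2) * β * n * m) * M * (M : ℝ) ^ (k + 1) := by rw [pow_succ]; ring
          _ ≤ 4 * D' * ε * (M : ℝ) ^ (k + 1) := by gcongr
          _ = 4 * D' * (ε * (M : ℝ) ^ (k + 1)) := by ring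
          _ = 4 * E ^ 2 * D ^ (2 ^ k + 2 * 5 ^ k) := by rw [hεM, hD', pow_add]; ring
          _ ≤ K * D ^ (2 * 5 ^ (k + 1)) :=
            mul_le_mul hK1 (hDpow (by omega)) (by positivity) (by positivity)
    · refine ⟨1, le_rfl, ?_, ?_⟩
      · rw [Nat.cast_one]
        exact one_le_mul_of_one_le_of_one_le hK0 (hD1 _)
      · have hd2 : distInt (β * (1 : ℕ)) ≤ 1 := (distInt_le_half _).trans (by norm_num)
        have hMk : (M : ℝ) ^ (k + 1) ≤ 240 * E ^ 2 * D ^ (2 ^ k + 2 * 5 ^ k) := by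
          calc (M : ℝ) ^ (k + 1) = 1 * (M : ℝ) ^ (k + 1) := by ring
            _ ≤ 240 * (ε * D') * (M : ℝ) ^ (k + 1) := by
              gcongr
              exact not_lt.mp hc2
            _ = 240 * D' * (ε * (M : ℝ) ^ (k + 1)) := by ring
            _ = _ := by rw [hεM, hD', pow_add]; ring
        calc distInt (β * (1 : ℕ)) * (M : ℝ) ^ (k + 1 + 1) ≤ 1 * (M : ℝ) ^ ((k + 1) * 2) := by
              refine mul_le_mul hd2 (pow_le_pow_right₀ hM1 (by omega)) (by positivity) zero_le_one
          _ = ((M : ℝ) ^ (k + 1)) ^ 2 := by rw [one_mul, pow_mul]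
          _ ≤ (240 * E ^ 2 * D ^ (2 ^ k + 2 * 5 ^ k)) ^ 2 := by gcongr
          _ = (240 * E ^ 2) ^ 2 * D ^ ((2 ^ k + 2 * 5 ^ k) * 2) := by rw [mul_pow _ _ 2, ← pow_mul]
          _ ≤ K * D ^ (2 * 5 ^ (k + 1)) :=
            mul_le_mul hK4 (hDpow (by omega)) (by positivity) (by positivity)

open Polynomial in
/-- Weyl's inequality with a power saving and no loss of logarithms or of `P ^ ε`, for a polynomial
of degree `k + 1` whose leading coefficient is a nonzero integer multiple of `α`. The constant depends
on `k`, the integer `c` and the relative length `κ` of the interval only. -/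
lemma weyl_poly (k : ℕ) (c : ℤ) (hc : c ≠ 0) (κ : ℝ) (hκ : 1 ≤ κ) : ∃ C : ℝ, 0 < C ∧
    ∀ (P : ℝ) (α : ℝ) (q : ℕ) (p : ℝ[X]) (a b : ℤ), 1 ≤ P → HasRatApprox α q →
      p.natDegree ≤ k + 1 → p.coeff (k + 1) = α * c → (b - a : ℝ) ≤ κ * P →
      ‖∑ t ∈ Finset.Ico a b, eF (p.eval (t : ℝ))‖ ≤
        C * P * (1 / q + P⁻¹ + q / P ^ (k + 1)) ^ (((10 : ℝ) ^ (k + 1))⁻¹ / 2) := by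
  obtain ⟨C, hC, hclaim⟩ := exists_distInt_le_of_weylA k
  have hc1 : (1 : ℝ) ≤ |(c : ℝ)| := by
    have := Int.one_le_abs hc
    exact_mod_cast this
  set K : ℝ := 2 * |(c : ℝ)| * C with hK
  have hK1 : 1 ≤ K := by nlinarith
  refine ⟨4 * κ * K, by positivity, ?_⟩
  intro P α q p a b hP hα hp hpc hab
  have hq0 := hα.pos
  have hq : (0 : ℝ) < q := by exact_mod_cast hq0
  have hP0 : 0 < P := by linarith
  set S := ‖∑ t ∈ Finset.Ico a b, eF (p.eval (t : ℝ))‖ with hS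
  set Δ : ℝ := 1 / q + P⁻¹ + q / P ^ (k + 1) with hΔ
  have hΔ0 : 0 < Δ := by positivity
  set δ : ℝ := ((10 : ℝ) ^ (k + 1))⁻¹ / 2 with hδ
  have hδ0 : 0 < δ := by positivity
  set M : ℕ := ⌈κ * P⌉₊ with hMdef
  have hMle : κ * P ≤ M := Nat.le_ceil _
  have hκP : 1 ≤ κ * P := one_le_mul_of_one_le_of_one_le hκ hP
  have hM2 : (M : ℝ) ≤ 2 * (κ * P) := by
    have := Nat.ceil_lt_add_one (show 0 ≤ κ * P by linarith)
    linarith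
  have hM1' : (1 : ℝ) ≤ M := by linarith
  have hM1 : 1 ≤ M := by exact_mod_cast hM1'
  have hM0 : (0 : ℝ) < M := by linarith
  have hPM : P ≤ M := by nlinarith
  have habM : b - a ≤ M := by
    have : (b - a : ℝ) ≤ M := hab.trans hMle
    exact_mod_cast this
  have hSM : S ≤ M := norm_expsum_le (fun t => p.eval (t : ℝ)) a b M habM
  suffices hmain : S ≤ 2 * M * (K * Δ ^ δ) by
    calc S ≤ 2 * M * (K * Δ ^ δ) := hmain
      _ ≤ 2 * (2 * (κ * P)) * (K * Δ ^ δ) := by gcongr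
      _ = _ := by ring
  rcases le_or_gt 1 Δ with hΔ1 | hΔ1
  · have h1 : 1 ≤ Δ ^ δ := Real.one_le_rpow hΔ1 hδ0.le
    have h2 : 1 ≤ K * Δ ^ δ := one_le_mul_of_one_le_of_one_le hK1 h1
    nlinarith
  rcases (show 0 ≤ S from norm_nonneg _).eq_or_lt with hS0 | hS0
  · rw [← hS0]; positivity
  -- `R` is the saving over the trivial bound; the aim is `R ^ (2 * 10 ^ k) ≫ 1 / Δ`
  set R : ℝ := 2 * M / S with hR
  have hR1 : 1 ≤ R := by rw [hR, one_le_div hS0]; linarith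
  set D : ℝ := R ^ 2 ^ k with hD
  have hD1 : 1 ≤ D := one_le_pow₀ hR1
  have hk2 : k < 2 ^ k := Nat.lt_two_pow_self
  have hRS : R * S = 2 * M := by rw [hR]; field_simp
  have hhyp : (2 * M : ℝ) ^ k * M ≤ weylA k M (p.coeff (k + 1)) * D := by
    have h := weyl_pow_le k p hp a b M hM1 habM
    have h1 : (2 * M : ℝ) ^ (2 ^ k - k - 1) * (2 * M) ^ (k + 1) ≤
        (2 * M : ℝ) ^ (2 ^ k - k - 1) * (weylA k M (p.coeff (k + 1)) * D) := by
      calc (2 * M : ℝ) ^ (2 ^ k - k - 1) * (2 * M) ^ (k + 1) = (R * S) ^ 2 ^ k := by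
            rw [← pow_add, hRS]
            congr 1
            omega
        _ = S ^ 2 ^ k * D := by rw [mul_pow, hD]; ring
        _ ≤ (2 * M : ℝ) ^ (2 ^ k - k - 1) * weylA k M (p.coeff (k + 1)) * D := by gcongr
        _ = _ := by ring
    refine le_trans ?_ (le_of_mul_le_mul_left h1 (by positivity))
    rw [pow_succ]
    gcongr
    linarith
  obtain ⟨n, hn1, hn2, hn3⟩ := hclaim M _ D hM1 hD1 hhyp
  have hn0 : (0 : ℝ) < n := by exact_mod_cast hn1
  set T := D ^ (2 * 5 ^ k) with hT
  have hT0 : 0 < T := by positivity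
  have hnT : (n : ℝ) ≤ C * T := by
    refine hn2.trans ?_
    have : 2 ^ k ≤ 5 ^ k := Nat.pow_le_pow_left (by norm_num) k
    exact mul_le_mul_of_nonneg_left (pow_le_pow_right₀ hD1 (by omega)) (by linarith)
  -- either `c n` is at least `q / 2`, or `‖α c n‖ ≥ 1 / (2 q)`
  have hKΔ : 1 ≤ K * Δ * T := by
    by_cases hcase : 2 * |c * (n : ℤ)| < q
    · have h1 := hα.distInt_ge (c * n) (mul_ne_zero hc (by omega)) hcase
      have h2 : α * ((c * (n : ℤ) : ℤ) : ℝ) = p.coeff (k + 1) * n := by rw [hpc]; push_cast; ring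
      rw [h2] at h1
      have h3 : 1 / (2 * q : ℝ) * P ^ (k + 1) ≤ C * T := by
        refine le_trans ?_ hn3
        gcongr
        exact distInt_nonneg _
      have h4 : 1 ≤ 2 * C * (q / P ^ (k + 1)) * T := by
        have : 0 < P ^ (k + 1) := by positivity
        rw [div_mul_eq_mul_div, one_mul, div_le_iff₀ (by positivity)] at h3
        have e : 2 * C * (q / P ^ (k + 1)) * T = (C * T * (2 * q)) / P ^ (k + 1) := by ring
        rw [e, one_le_div this]
        exact h3
      refine h4.trans ?_
      have : q / P ^ (k + 1) ≤ Δ := by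
        rw [hΔ]
        have : 0 < 1 / (q : ℝ) + P⁻¹ := by positivity
        linarith
      rw [hK]
      gcongr
      nlinarith
    · have h1 : (q : ℝ) ≤ 2 * (|(c : ℝ)| * n) := by
        have := not_lt.mp hcase
        rw [abs_mul, Nat.abs_cast] at this
        exact_mod_cast this
      have h2 : 1 ≤ K * (1 / q) * T := by
        have e : K * (1 / q) * T = (2 * (|(c : ℝ)| * (C * T))) / q := by rw [hK]; ring
        rw [e, one_le_div hq]
        refine h1.trans ?_
        gcongr
      refine h2.trans ?_
      have : 1 / (q : ℝ) ≤ Δ := by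
        rw [hΔ]
        have : 0 < P⁻¹ + q / P ^ (k + 1) := by positivity
        linarith
      gcongr
  have hTR : T = R ^ (2 * 10 ^ k) := by
    rw [hT, hD, ← pow_mul]
    congr 1
    rw [show (10 : ℕ) = 2 * 5 from rfl, mul_pow]
    ring
  set m : ℕ := 2 * 10 ^ k with hm
  have hm0 : m ≠ 0 := by positivity
  have hRm : (S / (2 * M)) ^ m ≤ K * Δ := by
    have e : (S / (2 * M)) * R = 1 := by rw [hR]; field_simp
    have e2 : (S / (2 * M)) ^ m * R ^ m = 1 := by rw [← mul_pow, e, one_pow]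
    rw [hTR] at hKΔ
    rw [← e2] at hKΔ
    exact le_of_mul_le_mul_right hKΔ (by positivity)
  have hroot : S / (2 * M) ≤ K * Δ ^ δ := by
    have h1 : S / (2 * M) = ((S / (2 * M)) ^ m) ^ ((m : ℝ)⁻¹) :=
      (Real.pow_rpow_inv_natCast (by positivity) hm0).symm
    have hm1 : (m : ℝ)⁻¹ ≤ 1 := by
      rw [inv_le_one₀ (by positivity)]
      exact_mod_cast Nat.one_le_iff_ne_zero.mpr hm0
    have hmδ : δ ≤ (m : ℝ)⁻¹ := by
      rw [hδ, hm]
      push_cast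
      rw [mul_inv, pow_succ, mul_inv]
      have : (0 : ℝ) < (10 ^ k)⁻¹ := by positivity
      linarith
    calc S / (2 * M) = ((S / (2 * M)) ^ m) ^ ((m : ℝ)⁻¹) := h1
      _ ≤ (K * Δ) ^ ((m : ℝ)⁻¹) := by gcongr
      _ = K ^ ((m : ℝ)⁻¹) * Δ ^ ((m : ℝ)⁻¹) := Real.mul_rpow (by positivity) hΔ0.le
      _ ≤ K * Δ ^ δ := by
        refine mul_le_mul ?_ ?_ (by positivity) (by positivity)
        · exact (Real.rpow_le_rpow_of_exponent_le hK1 hm1).trans_eq (Real.rpow_one K)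
        · exact Real.rpow_le_rpow_of_exponent_ge hΔ0 hΔ1.le hmδ
  rw [div_le_iff₀ (by positivity)] at hroot
  linarith

/-! ### Partial summation with piecewise constant weights -/

/-- Summation by parts. -/
lemma abel_bound (g : ℕ → ℝ) (z : ℕ → ℂ) (n : ℕ) (B : ℝ)
    (hB : ∀ j ≤ n, ‖∑ i ∈ Finset.range j, z i‖ ≤ B) :
    ‖∑ i ∈ Finset.range n, (g i : ℂ) * z i‖ ≤
      B * (|g n| + ∑ i ∈ Finset.range n, |g (i + 1) - g i|) := by
  have key : ∀ m : ℕ, ∑ i ∈ Finset.range m, (g i : ℂ) * z i =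
      g m * ∑ i ∈ Finset.range m, z i -
        ∑ i ∈ Finset.range m, ((g (i + 1) - g i : ℝ) : ℂ) * ∑ j ∈ Finset.range (i + 1), z j := by
    intro m
    induction m with
    | zero => simp
    | succ m ih =>
      rw [Finset.sum_range_succ, ih, Finset.sum_range_succ (fun i => ((g (i + 1) - g i : ℝ) : ℂ) * _) m,
        Finset.sum_range_succ z m]
      push_cast
      ring
  rw [key]
  refine (norm_sub_le _ _).trans ?_
  rw [mul_add]
  refine add_le_add ?_ ?_
  · rw [norm_mul, Complex.norm_real, Real.norm_eq_abs, mul_comm]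
    gcongr
    exact hB n le_rfl
  · refine (norm_sum_le _ _).trans ?_
    rw [Finset.mul_sum]
    refine Finset.sum_le_sum fun i hi => ?_
    rw [norm_mul, Complex.norm_real, Real.norm_eq_abs, mul_comm]
    gcongr
    exact hB _ (Finset.mem_range.mp hi)

open Polynomial in
/-- Each sign change between consecutive integers produces a real root in `[t, t + 1]`, and a root
serves at most two values of `t`. -/
lemma card_sign_change_le (f : ℝ[X]) (s : Finset ℤ)
    (hs : ∀ t ∈ s, SignType.sign (f.eval (t : ℝ)) ≠ SignType.sign (f.eval ((t + 1 : ℤ) : ℝ))) :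
    s.card ≤ 2 * f.natDegree := by
  rcases eq_or_ne f 0 with rfl | hf
  · have : s = ∅ := Finset.eq_empty_of_forall_notMem fun t ht => hs t ht (by simp)
    simp [this]
  have hsub : s ⊆ f.roots.toFinset.biUnion fun r => {⌊r⌋, ⌊r⌋ - 1} := by
    intro t ht
    have hroot : ∃ r : ℝ, (t : ℝ) ≤ r ∧ r ≤ t + 1 ∧ f.eval r = 0 := by
      have hcont : ContinuousOn (fun x => f.eval x) (Set.Icc (t : ℝ) (t + 1)) :=
        f.continuous.continuousOn
      have hle : (t : ℝ) ≤ t + 1 := by linarith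
      have hne := hs t ht
      push_cast at hne
      by_contra hno
      push Not at hno
      rcases lt_trichotomy (f.eval (t : ℝ)) 0 with h1 | h1 | h1
      · rcases lt_trichotomy (f.eval ((t : ℝ) + 1)) 0 with h2 | h2 | h2
        · exact hne (by rw [sign_neg h1, sign_neg h2])
        · exact hno _ hle le_rfl h2
        · obtain ⟨r, hr, hr0⟩ := intermediate_value_Icc hle hcont ⟨h1.le, h2.le⟩
          exact hno r hr.1 hr.2 hr0
      · exact hno _ le_rfl hle h1
      · rcases lt_trichotomy (f.eval ((t : ℝ) + 1)) 0 with h2 | h2 | h2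
        · obtain ⟨r, hr, hr0⟩ := intermediate_value_Icc' hle hcont ⟨h2.le, h1.le⟩
          exact hno r hr.1 hr.2 hr0
        · exact hno _ hle le_rfl h2
        · exact hne (by rw [sign_pos h1, sign_pos h2])
    obtain ⟨r, hr1, hr2, hr3⟩ := hroot
    refine Finset.mem_biUnion.mpr ⟨r, by simp [hf, hr3], ?_⟩
    have h1 : t ≤ ⌊r⌋ := Int.le_floor.mpr hr1
    have h2 : ⌊r⌋ ≤ t + 1 := by
      have : (⌊r⌋ : ℝ) ≤ t + 1 := (Int.floor_le r).trans hr2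
      exact_mod_cast this
    rw [Finset.mem_insert, Finset.mem_singleton]
    omega
  refine (Finset.card_le_card hsub).trans ?_
  refine (Finset.card_biUnion_le_card_mul _ _ 2 fun r _ => Finset.card_le_two).trans ?_
  rw [mul_comm]
  exact Nat.mul_le_mul_left 2 ((Multiset.toFinset_card_le _).trans f.card_roots')

open Polynomial in
/-- Weights in `[0, 1]` which change only where one of finitely many polynomials changes sign have
bounded total variation, so inserting them costs a constant factor. -/
lemma norm_weighted_sum_le {ι : Type*} (s : Finset ι) (f : ι → ℝ[X]) (e : ℕ)
    (hdeg : ∀ i ∈ s, (f i).natDegree ≤ e) (g : ℤ → ℝ) (hg0 : ∀ t, 0 ≤ g t) (hg1 : ∀ t, g t ≤ 1)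
    (hg : ∀ t : ℤ, (∀ i ∈ s, SignType.sign ((f i).eval (t : ℝ)) =
      SignType.sign ((f i).eval ((t + 1 : ℤ) : ℝ))) → g (t + 1) = g t)
    (z : ℤ → ℂ) (a b : ℤ) (B : ℝ) (hB : ∀ b' ≤ b, ‖∑ t ∈ Finset.Ico a b', z t‖ ≤ B) :
    ‖∑ t ∈ Finset.Ico a b, (g t : ℂ) * z t‖ ≤ B * (1 + 2 * e * s.card) := by
  have hB0 : 0 ≤ B := (norm_nonneg _).trans (hB b le_rfl)
  rcases le_or_gt b a with hab | hab
  · rw [Finset.Ico_eq_empty (by omega), Finset.sum_empty, norm_zero]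
    positivity
  have hvar : ∑ t ∈ Finset.Ico a b, |g (t + 1) - g t| ≤ 2 * e * s.card := by
    set bad : ι → Finset ℤ := fun i => (Finset.Ico a b).filter fun t =>
      SignType.sign ((f i).eval (t : ℝ)) ≠ SignType.sign ((f i).eval ((t + 1 : ℤ) : ℝ)) with hbad
    have h1 : ∀ t ∈ Finset.Ico a b, |g (t + 1) - g t| ≤ if t ∈ s.biUnion bad then 1 else 0 := by
      intro t ht
      split_ifs with h
      · rw [abs_le]
        constructor <;> linarith [hg0 t, hg1 t, hg0 (t + 1), hg1 (t + 1)]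
      · rw [hg t, sub_self, abs_zero]
        intro i hi
        by_contra hne
        exact h (Finset.mem_biUnion.mpr ⟨i, hi, Finset.mem_filter.mpr ⟨ht, hne⟩⟩)
    refine (Finset.sum_le_sum h1).trans ?_
    rw [← Finset.sum_filter, Finset.sum_const, nsmul_eq_mul, mul_one]
    have h2 : ((Finset.Ico a b).filter (· ∈ s.biUnion bad)).card ≤ s.card * (2 * e) := by
      refine (Finset.card_le_card (t := s.biUnion bad) fun t ht => (Finset.mem_filter.mp ht).2).trans ?_
      refine Finset.card_biUnion_le_card_mul _ _ _ fun i hi => ?_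
      refine (card_sign_change_le (f i) (bad i) fun t ht => (Finset.mem_filter.mp ht).2).trans ?_
      exact Nat.mul_le_mul_left 2 (hdeg i hi)
    have h3 : (((Finset.Ico a b).filter (· ∈ s.biUnion bad)).card : ℝ) ≤ (s.card * (2 * e) : ℕ) := by
      exact_mod_cast h2
    refine h3.trans_eq ?_
    push_cast
    ring
  rw [sum_Ico_int_eq] at hvar ⊢
  have h := abel_bound (fun i => g (a + i)) (fun i => z (a + i)) (b - a).toNat B (by
    intro j hj
    have := hB (a + j) (by omega)
    rw [sum_Ico_int_eq] at this
    simpa using this)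
  refine h.trans ?_
  gcongr
  · rw [abs_of_nonneg (hg0 _)]
    exact hg1 _
  · refine le_trans (Finset.sum_le_sum fun i _ => ?_) hvar
    push_cast
    rw [add_assoc]

/-! ### Size of elements and reduction modulo units -/

section
variable {L : Type*} [Field L] [NumberField L]

/-- The size `∑ ‖φ x‖ ^ 2` of an element, over all complex embeddings `φ` of the field (so that each
pair of conjugate embeddings is counted twice). It is the trace form when the field is totally real,
and in general quadratic in `x`. -/
noncomputable def embNormSq (x : L) : ℝ := ∑ φ : L →+* ℂ, ‖φ x‖ ^ 2

lemma embNormSq_nonneg (x : L) : 0 ≤ embNormSq x := by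
  unfold embNormSq; positivity

lemma norm_sq_le_embNormSq (x : L) (φ : L →+* ℂ) : ‖φ x‖ ^ 2 ≤ embNormSq x :=
  Finset.single_le_sum (f := fun φ : L →+* ℂ => ‖φ x‖ ^ 2) (fun _ _ => by positivity)
    (Finset.mem_univ φ)

lemma norm_embedding_pos {x : L} (hx : x ≠ 0) (φ : L →+* ℂ) : 0 < ‖φ x‖ :=
  norm_pos_iff.mpr ((map_ne_zero φ).mpr hx)

lemma embNormSq_pos {x : L} (hx : x ≠ 0) : 0 < embNormSq x := by
  have φ : L →+* ℂ := Classical.arbitrary _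
  exact (pow_pos (norm_embedding_pos hx φ) 2).trans_le (norm_sq_le_embNormSq x φ)

lemma finite_units_norm_le (B : ℝ) :
    {u : (𝓞 L)ˣ | ∀ φ : L →+* ℂ, ‖φ ((u : 𝓞 L) : L)‖ ≤ B}.Finite := by
  have h := NumberField.Embeddings.finite_of_norm_le L ℂ B
  refine Set.Finite.of_finite_image (f := fun u : (𝓞 L)ˣ => ((u : 𝓞 L) : L)) (h.subset ?_) ?_
  · rintro _ ⟨u, hu, rfl⟩
    exact ⟨(u : 𝓞 L).2, hu⟩
  · intro u _ v _ huv
    exact Units.ext (RingOfIntegers.ext huv)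

/-- A power of a unit from the proof of Dirichlet's unit theorem is small away from the place `w`. -/
lemma exists_unit_small (w : InfinitePlace L) :
    ∃ u : (𝓞 L)ˣ, ∀ φ : L →+* ℂ, InfinitePlace.mk φ ≠ w → ‖φ ((u : 𝓞 L) : L)‖ ^ 2 ≤ 1 / 4 := by
  obtain ⟨u, hu⟩ := NumberField.Units.dirichletUnitTheorem.exists_unit L w
  have h1 : ∀ φ : L →+* ℂ, InfinitePlace.mk φ ≠ w → ‖φ ((u : 𝓞 L) : L)‖ < 1 := by
    intro φ hφ
    have h := hu _ hφ
    have hpos := norm_embedding_pos (x := ((u : 𝓞 L) : L)) (by simp) φ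
    rw [InfinitePlace.apply] at h
    by_contra hge
    exact absurd (Real.log_nonneg (not_lt.mp hge)) (not_le.mpr h)
  have h2 : ∀ᶠ n : ℕ in Filter.atTop, ∀ φ : L →+* ℂ, InfinitePlace.mk φ ≠ w →
      ‖φ ((u : 𝓞 L) : L)‖ ^ n < 1 / 2 := by
    rw [Filter.eventually_all]
    intro φ
    by_cases hφ : InfinitePlace.mk φ ≠ w
    · have := tendsto_pow_atTop_nhds_zero_of_lt_one (norm_nonneg _) (h1 φ hφ)
      filter_upwards [this.eventually (gt_mem_nhds (show (0 : ℝ) < 1 / 2 by norm_num))] with n hn _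
      exact hn
    · exact Filter.Eventually.of_forall fun n h => absurd h hφ
  obtain ⟨n, hn⟩ := h2.exists
  refine ⟨u ^ n, fun φ hφ => ?_⟩
  have h3 := hn φ hφ
  have e : φ (((u ^ n : (𝓞 L)ˣ) : 𝓞 L) : L) = φ ((u : 𝓞 L) : L) ^ n := by
    push_cast
    rw [map_pow]
  rw [e, norm_pow]
  have h0 : 0 ≤ ‖φ ((u : 𝓞 L) : L)‖ ^ n := by positivity
  nlinarith

/-- There is a finite set `V` of units such that an element whose size is not decreased by the units
in `V` has all conjugates of comparable size, and every unit that does not increase its size is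
already in `V`.

For the first claim, if `‖φ x‖` were small at a place `w` then multiplication by the unit which is
small at all other places would decrease the size. The second follows from the first, as such a unit has
bounded conjugates. -/
lemma exists_reduction_units : ∃ (C : ℝ) (V : Finset (𝓞 L)ˣ), 0 < C ∧
    ∀ x : L, x ≠ 0 → (∀ u ∈ V, embNormSq x ≤ embNormSq (((u : 𝓞 L) : L) * x)) →
      (∀ φ : L →+* ℂ, embNormSq x ≤ C * ‖φ x‖ ^ 2) ∧
      ∀ u : (𝓞 L)ˣ, embNormSq (((u : 𝓞 L) : L) * x) ≤ embNormSq x → u ∈ V := by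
  choose ε hε using exists_unit_small (L := L)
  set C : ℝ := 4 / 3 * (1 + ∑ w, embNormSq ((ε w : 𝓞 L) : L)) with hC
  have hsum0 : 0 ≤ ∑ w, embNormSq ((ε w : 𝓞 L) : L) :=
    Finset.sum_nonneg fun w _ => embNormSq_nonneg _
  have hC0 : 0 < C := by rw [hC]; positivity
  set V1 := (finite_units_norm_le (L := L) (Real.sqrt C)).toFinset with hV1
  refine ⟨C, V1 ∪ Finset.univ.image ε, hC0, fun x hx hred => ?_⟩
  have hbd : ∀ φ : L →+* ℂ, embNormSq x ≤ C * ‖φ x‖ ^ 2 := by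
    intro φ
    set w := InfinitePlace.mk φ with hw
    have h1 := hred (ε w) (Finset.mem_union_right _ (Finset.mem_image_of_mem _ (Finset.mem_univ _)))
    have h2 : embNormSq (((ε w : 𝓞 L) : L) * x) ≤
        1 / 4 * embNormSq x + embNormSq ((ε w : 𝓞 L) : L) * ‖φ x‖ ^ 2 := by
      unfold embNormSq
      rw [Finset.mul_sum, Finset.sum_mul, ← Finset.sum_add_distrib]
      refine Finset.sum_le_sum fun ψ _ => ?_
      rw [map_mul, norm_mul, mul_pow]
      by_cases hψ : InfinitePlace.mk ψ = w
      · have : ‖ψ x‖ = ‖φ x‖ := by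
          rw [← InfinitePlace.apply ψ, ← InfinitePlace.apply φ, hψ]
        rw [this]
        have : 0 ≤ 1 / 4 * ‖φ x‖ ^ 2 := by positivity
        linarith
      · have h3 := hε w ψ hψ
        have : ‖ψ ((ε w : 𝓞 L) : L)‖ ^ 2 * ‖ψ x‖ ^ 2 ≤ 1 / 4 * ‖ψ x‖ ^ 2 := by gcongr
        have : 0 ≤ ‖ψ ((ε w : 𝓞 L) : L)‖ ^ 2 * ‖φ x‖ ^ 2 := by positivity
        linarith
    have h3 : embNormSq ((ε w : 𝓞 L) : L) ≤ ∑ w, embNormSq ((ε w : 𝓞 L) : L) :=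
      Finset.single_le_sum (f := fun w => embNormSq ((ε w : 𝓞 L) : L))
        (fun _ _ => embNormSq_nonneg _) (Finset.mem_univ w)
    have h4 : embNormSq ((ε w : 𝓞 L) : L) * ‖φ x‖ ^ 2 ≤ (3 / 4 * C) * ‖φ x‖ ^ 2 := by
      gcongr
      rw [hC]
      linarith
    linarith
  refine ⟨hbd, fun u hu => Finset.mem_union_left _ ?_⟩
  rw [hV1, Set.Finite.mem_toFinset]
  intro φ
  refine Real.le_sqrt_of_sq_le ?_
  have h1 := (norm_sq_le_embNormSq (((u : 𝓞 L) : L) * x) φ).trans (hu.trans (hbd φ))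
  rw [map_mul, norm_mul, mul_pow] at h1
  exact le_of_mul_le_mul_right h1 (pow_pos (norm_embedding_pos hx φ) 2)

lemma prod_norm_embedding (x : L) : ∏ φ : L →+* ℂ, ‖φ x‖ = |(Algebra.norm ℚ x : ℝ)| := by
  have h := Algebra.norm_eq_prod_embeddings ℚ ℂ x
  have h2 := congrArg norm h
  rw [norm_prod] at h2
  rw [Fintype.prod_equiv (RingHom.equivRatAlgHom L ℂ) (fun φ => ‖φ x‖) (fun f => ‖f x‖)
    (fun _ => by simp [RingHom.equivRatAlgHom_apply]), ← h2]
  simp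

/-- The product of the conjugates is the norm, so comparable conjugates bound the size by the norm. -/
lemma embNormSq_pow_le {x : L} {C : ℝ} (hC : ∀ φ : L →+* ℂ, embNormSq x ≤ C * ‖φ x‖ ^ 2) :
    embNormSq x ^ Module.finrank ℚ L ≤
      C ^ Module.finrank ℚ L * (Algebra.norm ℚ x : ℝ) ^ 2 := by
  have h : ∏ _φ : L →+* ℂ, embNormSq x ≤ ∏ φ : L →+* ℂ, C * ‖φ x‖ ^ 2 :=
    Finset.prod_le_prod (fun _ _ => embNormSq_nonneg x) fun φ _ => hC φ
  rw [Finset.prod_const, Finset.prod_mul_distrib, Finset.prod_const, Finset.prod_pow,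
    prod_norm_embedding, Finset.card_univ, NumberField.Embeddings.card, sq_abs] at h
  exact h

end

section
variable {L : Type*} [Field L] [NumberField L]

/-- The weight of `x` as a representative of its orbit under the units: `0` if some unit in `V`
decreases the size of `x`, and otherwise the inverse of the number of units in `V` preserving it. For
`V` as in `exists_reduction_units` and `x ≠ 0` that number is positive, as `1 ∈ V`, and the weights
select each orbit with total weight `1`. Dividing by the number of ties avoids having to choose among
the elements of minimal size, so that the weight is determined by the signs of quadratic functions of
`x`. -/
noncomputable def redWeight (V : Finset (𝓞 L)ˣ) (x : L) : ℝ :=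
  if ∀ u ∈ V, embNormSq x ≤ embNormSq (((u : 𝓞 L) : L) * x) then
    ((V.filter fun u : (𝓞 L)ˣ => embNormSq (((u : 𝓞 L) : L) * x) = embNormSq x).card : ℝ)⁻¹ else 0

lemma redWeight_nonneg (V : Finset (𝓞 L)ˣ) (x : L) : 0 ≤ redWeight V x := by
  unfold redWeight
  split_ifs <;> positivity

lemma redWeight_le_one (V : Finset (𝓞 L)ˣ) (x : L) : redWeight V x ≤ 1 := by
  unfold redWeight
  split_ifs
  · exact Nat.cast_inv_le_one _
  · exact zero_le_one

/-- `redWeight` only depends on the signs of finitely many differences. -/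
lemma redWeight_congr (V : Finset (𝓞 L)ˣ) (x y : L)
    (h : ∀ u ∈ V, SignType.sign (embNormSq (((u : 𝓞 L) : L) * x) - embNormSq x) =
      SignType.sign (embNormSq (((u : 𝓞 L) : L) * y) - embNormSq y)) :
    redWeight V x = redWeight V y := by
  have h1 : (∀ u ∈ V, embNormSq x ≤ embNormSq (((u : 𝓞 L) : L) * x)) ↔
      ∀ u ∈ V, embNormSq y ≤ embNormSq (((u : 𝓞 L) : L) * y) := by
    refine forall₂_congr fun u hu => ?_
    rw [← sub_nonneg, ← sign_nonneg_iff, h u hu, sign_nonneg_iff, sub_nonneg]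
  have h2 : (V.filter fun u : (𝓞 L)ˣ => embNormSq (((u : 𝓞 L) : L) * x) = embNormSq x) =
      V.filter fun u : (𝓞 L)ˣ => embNormSq (((u : 𝓞 L) : L) * y) = embNormSq y := by
    refine Finset.filter_congr fun u hu => ?_
    rw [← sub_eq_zero, ← sign_eq_zero_iff, h u hu, sign_eq_zero_iff, sub_eq_zero]
  unfold redWeight
  simp only [h1, h2]

lemma exists_min_orbit {x : L} (hx : x ≠ 0) :
    ∃ v : (𝓞 L)ˣ, ∀ u : (𝓞 L)ˣ, embNormSq (((v : 𝓞 L) : L) * x) ≤ embNormSq (((u : 𝓞 L) : L) * x) := by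
  set S : Set (𝓞 L)ˣ := {u | embNormSq (((u : 𝓞 L) : L) * x) ≤ embNormSq x} with hS
  have hfin : S.Finite := by
    refine (finite_units_norm_le (L := L)
      (∑ φ : L →+* ℂ, Real.sqrt (embNormSq x / ‖φ x‖ ^ 2))).subset fun u hu φ => ?_
    refine le_trans ?_ (Finset.single_le_sum
      (f := fun φ : L →+* ℂ => Real.sqrt (embNormSq x / ‖φ x‖ ^ 2))
      (fun _ _ => Real.sqrt_nonneg _) (Finset.mem_univ φ))
    refine Real.le_sqrt_of_sq_le ?_
    rw [le_div_iff₀ (pow_pos (norm_embedding_pos hx φ) 2), ← mul_pow, ← norm_mul, ← map_mul]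
    exact (norm_sq_le_embNormSq _ φ).trans hu
  obtain ⟨v, hv, hmin⟩ := Set.exists_min_image S (fun u => embNormSq (((u : 𝓞 L) : L) * x)) hfin
    ⟨1, by simp [hS]⟩
  refine ⟨v, fun u => ?_⟩
  by_cases hu : u ∈ S
  · exact hmin u hu
  · exact le_trans hv (le_of_lt (not_le.mp hu))

/-- The weights of the elements of an orbit of the unit group add up to `1`. The finite set `S` is any
part of the orbit that contains all its `V`-reduced elements. -/
lemma sum_redWeight_eq_one (V : Finset (𝓞 L)ˣ)
    (hV : ∀ x : L, x ≠ 0 → (∀ u ∈ V, embNormSq x ≤ embNormSq (((u : 𝓞 L) : L) * x)) →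
      ∀ u : (𝓞 L)ˣ, embNormSq (((u : 𝓞 L) : L) * x) ≤ embNormSq x → u ∈ V)
    (x : L) (hx : x ≠ 0) (S : Finset L) (hS1 : ∀ y ∈ S, ∃ u : (𝓞 L)ˣ, y = ((u : 𝓞 L) : L) * x)
    (hS2 : ∀ u : (𝓞 L)ˣ, (∀ v ∈ V, embNormSq (((u : 𝓞 L) : L) * x) ≤
      embNormSq (((v : 𝓞 L) : L) * (((u : 𝓞 L) : L) * x))) → ((u : 𝓞 L) : L) * x ∈ S) :
    ∑ y ∈ S, redWeight V y = 1 := by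
  have hmul : ∀ (u v : (𝓞 L)ˣ) (z : L), ((u : 𝓞 L) : L) * (((v : 𝓞 L) : L) * z) =
      (((u * v : (𝓞 L)ˣ) : 𝓞 L) : L) * z := by
    intro u v z
    push_cast
    ring
  obtain ⟨w, hw⟩ := exists_min_orbit hx
  set y := ((w : 𝓞 L) : L) * x with hy
  have hu0 : ∀ u : (𝓞 L)ˣ, ((u : 𝓞 L) : L) ≠ 0 := fun u => by simp
  have hy0 : y ≠ 0 := mul_ne_zero (hu0 w) hx
  have hymin : ∀ u : (𝓞 L)ˣ, embNormSq y ≤ embNormSq (((u : 𝓞 L) : L) * y) := by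
    intro u
    rw [hy, hmul]
    exact hw _
  have hVy := hV y hy0 fun u _ => hymin u
  set A := V.filter fun u : (𝓞 L)ˣ => embNormSq (((u : 𝓞 L) : L) * y) = embNormSq y with hA
  have hmemA : ∀ u : (𝓞 L)ˣ, u ∈ A ↔ embNormSq (((u : 𝓞 L) : L) * y) = embNormSq y := by
    intro u
    rw [hA, Finset.mem_filter]
    exact ⟨fun h => h.2, fun h => ⟨hVy u h.le, h⟩⟩
  have h1A : (1 : (𝓞 L)ˣ) ∈ A := by rw [hmemA]; simp
  have hApos : (A.card : ℝ) ≠ 0 := by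
    have := Finset.card_pos.mpr ⟨_, h1A⟩
    exact_mod_cast this.ne'
  -- elements of minimal size have weight `1 / #A`
  have hwt : ∀ v ∈ A, redWeight V (((v : 𝓞 L) : L) * y) = (A.card : ℝ)⁻¹ := by
    intro v hv
    have hv' := (hmemA v).mp hv
    have hred : ∀ u : (𝓞 L)ˣ, embNormSq (((v : 𝓞 L) : L) * y) ≤
        embNormSq (((u : 𝓞 L) : L) * (((v : 𝓞 L) : L) * y)) := by
      intro u
      rw [hv', hmul]
      exact hymin _
    unfold redWeight
    rw [if_pos fun u _ => hred u]
    congr 2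
    refine Finset.card_bij (fun u _ => u * v) ?_ ?_ ?_
    · intro u hu
      rw [hmemA, ← hmul, (Finset.mem_filter.mp hu).2, hv']
    · intro a _ b _ hab
      exact mul_right_cancel hab
    · intro u hu
      have hu' := (hmemA u).mp hu
      have e : embNormSq ((((u * v⁻¹ : (𝓞 L)ˣ) : 𝓞 L) : L) * (((v : 𝓞 L) : L) * y)) =
          embNormSq (((v : 𝓞 L) : L) * y) := by
        rw [hmul, inv_mul_cancel_right, hu', hv']
      refine ⟨u * v⁻¹, Finset.mem_filter.mpr ⟨?_, e⟩, inv_mul_cancel_right u v⟩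
      exact hV _ (mul_ne_zero (hu0 v) hy0) (fun u _ => hred u) _ e.le
  have himage : A.image (fun u : (𝓞 L)ˣ => ((u : 𝓞 L) : L) * y) ⊆ S := by
    intro z hz
    obtain ⟨u, hu, rfl⟩ := Finset.mem_image.mp hz
    rw [hy, hmul]
    refine hS2 _ fun v _ => ?_
    rw [← hmul, ← hy, (hmemA u).mp hu, hmul]
    exact hymin _
  rw [← Finset.sum_subset himage]
  · rw [Finset.sum_image, Finset.sum_congr rfl hwt, Finset.sum_const, nsmul_eq_mul,
      mul_inv_cancel₀ hApos]
    intro a _ b _ hab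
    exact Units.ext (RingOfIntegers.ext (mul_right_cancel₀ hy0 hab))
  · intro z hz hzA
    unfold redWeight
    rw [if_neg]
    intro hred
    obtain ⟨u, rfl⟩ := hS1 z hz
    have e : ((u : 𝓞 L) : L) * x = (((u * w⁻¹ : (𝓞 L)ˣ) : 𝓞 L) : L) * y := by
      rw [hy, hmul, inv_mul_cancel_right]
    have hle : embNormSq (((u : 𝓞 L) : L) * x) ≤ embNormSq y := by
      by_contra hlt
      have e2 : (((w * u⁻¹ : (𝓞 L)ˣ) : 𝓞 L) : L) * (((u : 𝓞 L) : L) * x) = y := by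
        rw [hmul, inv_mul_cancel_right, hy]
      have hmem := hV _ (mul_ne_zero (hu0 u) hx) hred (w * u⁻¹) (by
        rw [e2]; exact (not_le.mp hlt).le)
      have := hred _ hmem
      rw [e2] at this
      exact hlt this
    refine hzA (Finset.mem_image.mpr ⟨u * w⁻¹, ?_, e.symm⟩)
    rw [hmemA, ← e]
    exact le_antisymm hle (by rw [e]; exact hymin _)

end

/-! ### Coordinates, and polynomials on lines -/

section
variable {L : Type*} [Field L] [NumberField L]

open scoped nonZeroDivisors in
/-- An integral basis of the ideal `J`, as a `ℚ`-basis of the field: `J` is exactly the set of its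
integral combinations. -/
lemma exists_ideal_basis (J : Ideal (𝓞 L)) (hJ : J ≠ ⊥) (k : ℕ)
    (hk : Module.finrank ℚ L = k + 1) :
    ∃ b : Module.Basis (Fin (k + 1)) ℚ L,
      (∀ c : Fin (k + 1) → ℤ, ∃ x ∈ J, (x : L) = ∑ i, (c i : L) * b i) ∧
      ∀ x ∈ J, ∃ c : Fin (k + 1) → ℤ, (x : L) = ∑ i, (c i : L) * b i := by
  have hJ' : (J : FractionalIdeal (𝓞 L)⁰ L) ≠ 0 := by
    rwa [Ne, FractionalIdeal.coeIdeal_eq_zero]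
  set U : (FractionalIdeal (𝓞 L)⁰ L)ˣ := Units.mk0 _ hJ' with hU
  have hcard : Fintype.card (Module.Free.ChooseBasisIndex ℤ (U : FractionalIdeal (𝓞 L)⁰ L)) =
      k + 1 := by
    rw [← hk, Module.finrank_eq_card_basis (basisOfFractionalIdeal L U)]
  set e := Fintype.equivFinOfCardEq hcard with he
  set b := (basisOfFractionalIdeal L U).reindex e with hb
  have hspan : ∀ x : L, x ∈ Submodule.span ℤ (Set.range b) ↔ ∃ y ∈ J, (y : L) = x := by
    intro x
    rw [hb, Module.Basis.range_reindex, mem_span_basisOfFractionalIdeal]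
    change x ∈ (J : FractionalIdeal (𝓞 L)⁰ L) ↔ _
    rw [FractionalIdeal.mem_coeIdeal]
  refine ⟨b, fun c => ?_, fun x hx => ?_⟩
  · have h := (Submodule.mem_span_range_iff_exists_fun ℤ (v := b)
      (x := ∑ i, (c i : L) * b i)).mpr ⟨c, by simp [zsmul_eq_mul]⟩
    obtain ⟨y, hy, e⟩ := (hspan _).mp h
    exact ⟨y, hy, e⟩
  · obtain ⟨c, hc⟩ := (Submodule.mem_span_range_iff_exists_fun ℤ).mp
      ((hspan (x : L)).mpr ⟨x, hx, rfl⟩)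
    exact ⟨c, by rw [← hc]; simp [zsmul_eq_mul]⟩

lemma abs_trace_mul_le (x y : L) :
    |(Algebra.trace ℚ L (x * y) : ℝ)| ≤ Real.sqrt (embNormSq x) * ∑ φ : L →+* ℂ, ‖φ y‖ := by
  have h := trace_eq_sum_embeddings (K := ℚ) (L := L) ℂ (x := x * y)
  have h2 := congrArg norm h
  rw [← Fintype.sum_equiv (RingHom.equivRatAlgHom L ℂ) (fun φ => φ (x * y)) (fun f => f (x * y))
    (fun _ => by simp [RingHom.equivRatAlgHom_apply])] at h2
  have h3 : |(Algebra.trace ℚ L (x * y) : ℝ)| = ‖algebraMap ℚ ℂ (Algebra.trace ℚ L (x * y))‖ := by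
    simp
  rw [h3, h2, Finset.mul_sum]
  refine (norm_sum_le _ _).trans (Finset.sum_le_sum fun φ _ => ?_)
  rw [map_mul, norm_mul]
  gcongr
  exact Real.le_sqrt_of_sq_le (norm_sq_le_embNormSq x φ)

/-- Coordinates are bounded by the size, being traces against the dual basis for the trace form. -/
lemma exists_coord_bound {k : ℕ} (b : Module.Basis (Fin (k + 1)) ℚ L) :
    ∃ C : ℝ, 0 < C ∧ ∀ (c : Fin (k + 1) → ℤ) (i),
      |(c i : ℝ)| ≤ C * Real.sqrt (embNormSq (∑ i, (c i : L) * b i)) := by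
  refine ⟨1 + ∑ i, ∑ φ : L →+* ℂ, ‖φ (b.traceDual i)‖, by positivity, fun c i => ?_⟩
  set x := ∑ i, (c i : L) * b i with hx
  have h1 : b.repr x i = c i := by
    have : x = ∑ i, (c i : ℚ) • b i := by
      rw [hx]
      exact Finset.sum_congr rfl fun i _ => by simp [Algebra.smul_def]
    rw [this, Module.Basis.repr_sum_self]
  have h2 : b.repr x i = Algebra.trace ℚ L (x * b.traceDual i) := by
    have := Module.Basis.traceDual_repr_apply b.traceDual x i
    rwa [Module.Basis.traceDual_traceDual, Algebra.traceForm_apply] at this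
  have h3 := abs_trace_mul_le x (b.traceDual i)
  rw [← h2, h1] at h3
  push_cast at h3
  refine h3.trans ?_
  rw [mul_comm]
  gcongr
  have := Finset.single_le_sum (f := fun i => ∑ φ : L →+* ℂ, ‖φ (b.traceDual i)‖)
    (fun i _ => by positivity) (Finset.mem_univ i)
  linarith

/-- On the line `y + t z` the norm is a polynomial in `t` with leading coefficient `N z`: it is `N z`
times the characteristic polynomial of multiplication by `-y / z`. -/
lemma exists_normPoly (y z : L) (hz : z ≠ 0) : ∃ p : Polynomial ℝ,
    p.natDegree ≤ Module.finrank ℚ L ∧ p.coeff (Module.finrank ℚ L) = (Algebra.norm ℚ z : ℝ) ∧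
    ∀ t : ℤ, p.eval (t : ℝ) = (Algebra.norm ℚ (y + (t : L) * z) : ℝ) := by
  set f := Algebra.lmul ℚ L (-y / z) with hf
  have hdeg : f.charpoly.natDegree = Module.finrank ℚ L := LinearMap.charpoly_natDegree f
  refine ⟨Polynomial.C (Algebra.norm ℚ z : ℝ) * f.charpoly.map (algebraMap ℚ ℝ), ?_, ?_,
    fun t => ?_⟩
  · refine (Polynomial.natDegree_C_mul_le _ _).trans ?_
    rw [Polynomial.natDegree_map, hdeg]
  · rw [Polynomial.coeff_C_mul, Polynomial.coeff_map, ← hdeg]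
    have := (LinearMap.charpoly_monic f).coeff_natDegree
    rw [this]; simp
  · have e : y + (t : L) * z = z * ((t : ℚ) - (-y / z)) := by
      field_simp
      push_cast
      ring
    have h2 : f.charpoly.eval (t : ℚ) = Algebra.norm ℚ (((t : ℚ) : L) - (-y / z)) := by
      rw [LinearMap.eval_charpoly, Algebra.norm_apply, hf]
      congr 1
      ext w
      simp [Algebra.smul_def]
    rw [e, map_mul, ← h2, Polynomial.eval_mul, Polynomial.eval_C]
    push_cast
    congr 1
    have := Polynomial.eval_map_algebraMap  (R := ℚ) (B := ℝ) f.charpoly ((t : ℚ) : ℝ)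
    rw [Polynomial.eval_map, show (t : ℝ) = algebraMap ℚ ℝ (t : ℚ) by simp,
      Polynomial.eval₂_at_apply]
    simp

lemma exists_embPoly (y z : L) : ∃ p : Polynomial ℝ, p.natDegree ≤ 2 ∧
    ∀ t : ℤ, p.eval (t : ℝ) = embNormSq (y + (t : L) * z) := by
  refine ⟨Polynomial.C (∑ φ : L →+* ℂ, ‖φ z‖ ^ 2) * Polynomial.X ^ 2 +
    Polynomial.C (∑ φ : L →+* ℂ, 2 * ((φ y).re * (φ z).re + (φ y).im * (φ z).im)) * Polynomial.X +
    Polynomial.C (∑ φ : L →+* ℂ, ‖φ y‖ ^ 2), Polynomial.natDegree_quadratic_le, fun t => ?_⟩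
  simp only [Polynomial.eval_add, Polynomial.eval_mul, Polynomial.eval_C, Polynomial.eval_pow,
    Polynomial.eval_X, embNormSq, Finset.sum_mul, ← Finset.sum_add_distrib]
  refine Finset.sum_congr rfl fun φ _ => ?_
  rw [map_add, map_mul, map_intCast, Complex.sq_norm, Complex.sq_norm, Complex.sq_norm,
    Complex.normSq_apply, Complex.normSq_apply, Complex.normSq_apply]
  simp
  ring
end

/-! ### Sums over lines and boxes -/

section
variable {L : Type*} [Field L] [NumberField L]

lemma sign_weight_congr {a b T : ℝ} {w v : ℝ} (h1 : SignType.sign a = SignType.sign b)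
    (h2 : SignType.sign (a - T) = SignType.sign (b - T)) (hw : w = v) :
    (if 0 < a ∧ a ≤ T then w else 0) = if 0 < b ∧ b ≤ T then v else 0 := by
  have e1 : 0 < a ↔ 0 < b := by rw [← sign_eq_one_iff, h1, sign_eq_one_iff]
  have e2 : a ≤ T ↔ b ≤ T := by
    rw [← sub_nonpos, ← sign_nonpos_iff, h2, sign_nonpos_iff, sub_nonpos]
  simp only [e1, e2, hw]

/-- The weighted exponential sum over a line `y + t z`. The sign `s = ± 1` restricts to the part of the
line on which the norm has sign `s`, where `s * N x` is the absolute value of the norm. The factor in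
front of the phase changes only where `s N x`, `s N x - T` or one of the quadratic polynomials
comparing the sizes of `u x` and `x` changes sign, so Weyl's inequality applies after partial
summation. The bound is uniform in `y` and `T`. -/
lemma line_bound (k : ℕ) (hk : Module.finrank ℚ L = k + 1) (V : Finset (𝓞 L)ˣ) (z : L)
    (hz : z ≠ 0) (N : ℝ) (hN : 0 < N) (m : ℤ) (hm : (Algebra.norm ℚ z : ℝ) = m * N)
    (κ : ℝ) (hκ : 1 ≤ κ) (s : ℤ) (hs : s ≠ 0) :
    ∃ C : ℝ, 0 < C ∧ ∀ (P α : ℝ) (q : ℕ), 1 ≤ P → HasRatApprox α q →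
      ∀ (y : L) (T : ℝ) (a b : ℤ), ((b - a : ℤ) : ℝ) ≤ κ * P →
      ‖∑ t ∈ Finset.Ico a b, ((if 0 < (s : ℝ) * (Algebra.norm ℚ (y + (t : L) * z) : ℝ) ∧
          (s : ℝ) * (Algebra.norm ℚ (y + (t : L) * z) : ℝ) ≤ T then
          redWeight V (y + (t : L) * z) else 0 : ℝ) : ℂ) *
          eF (α * (s * (Algebra.norm ℚ (y + (t : L) * z) : ℝ) / N))‖ ≤
        C * P * (1 / q + P⁻¹ + q / P ^ (k + 1)) ^ (((10 : ℝ) ^ (k + 1))⁻¹ / 2) := by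
  have hm0 : m ≠ 0 := by
    rintro rfl
    have : Algebra.norm ℚ z = 0 := by
      have : (Algebra.norm ℚ z : ℝ) = 0 := by rw [hm]; simp
      exact_mod_cast this
    exact hz (Algebra.norm_eq_zero_iff.mp this)
  obtain ⟨C, hC, H⟩ := weyl_poly k (s * m) (mul_ne_zero hs hm0) κ hκ
  refine ⟨C * (1 + 2 * ((k + 2 : ℕ) : ℝ) * ((V.card + 2 : ℕ) : ℝ)), by positivity, ?_⟩
  intro P α q hP hq y T a b hab
  obtain ⟨p, hp1, hp2, hp3⟩ := exists_normPoly y z hz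
  rw [hk] at hp1 hp2
  choose! pu hpu1 hpu2 using fun u : (𝓞 L)ˣ =>
    exists_embPoly (((u : 𝓞 L) : L) * y) (((u : 𝓞 L) : L) * z)
  obtain ⟨pQ, hpQ1, hpQ2⟩ := exists_embPoly y z
  set B := C * P * (1 / (q : ℝ) + P⁻¹ + q / P ^ (k + 1)) ^ (((10 : ℝ) ^ (k + 1))⁻¹ / 2) with hB
  have hB0 : 0 ≤ B := by rw [hB]; positivity
  set F : Finset (Polynomial ℝ) :=
    insert (Polynomial.C (s : ℝ) * p) (insert (Polynomial.C (s : ℝ) * p - Polynomial.C T)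
      (V.image fun u : (𝓞 L)ˣ => pu u - pQ)) with hF
  have hFc : F.card ≤ V.card + 2 := by
    rw [hF]
    refine (Finset.card_insert_le _ _).trans ?_
    have h1 := Finset.card_insert_le (Polynomial.C (s : ℝ) * p - Polynomial.C T)
      (V.image fun u : (𝓞 L)ˣ => pu u - pQ)
    have h2 := Finset.card_image_le (s := V) (f := fun u : (𝓞 L)ˣ => pu u - pQ)
    omega
  have hdeg1 : (Polynomial.C (s : ℝ) * p).natDegree ≤ k + 1 :=
    (Polynomial.natDegree_C_mul_le _ _).trans hp1
  have hFdeg : ∀ f ∈ F, (id f).natDegree ≤ k + 2 := by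
    intro f hf
    rw [hF, Finset.mem_insert, Finset.mem_insert, Finset.mem_image] at hf
    rcases hf with rfl | rfl | ⟨u, -, rfl⟩
    · exact hdeg1.trans (by omega)
    · refine (Polynomial.natDegree_sub_le _ _).trans ?_
      rw [Polynomial.natDegree_C]
      exact max_le (hdeg1.trans (by omega)) (by omega)
    · refine (Polynomial.natDegree_sub_le _ _).trans ?_
      exact max_le ((hpu1 u).trans (by omega)) (hpQ1.trans (by omega))
  have key := norm_weighted_sum_le F id (k + 2) hFdeg
    (fun t : ℤ => if 0 < (s : ℝ) * (Algebra.norm ℚ (y + (t : L) * z) : ℝ) ∧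
          (s : ℝ) * (Algebra.norm ℚ (y + (t : L) * z) : ℝ) ≤ T then
          redWeight V (y + (t : L) * z) else 0)
    (fun t => by
      split_ifs
      · exact redWeight_nonneg _ _
      · exact le_rfl)
    (fun t => by
      split_ifs
      · exact redWeight_le_one _ _
      · exact zero_le_one)
    (fun t ht => by
      have h1 := ht (Polynomial.C (s : ℝ) * p) (by simp [hF])
      have h2 := ht (Polynomial.C (s : ℝ) * p - Polynomial.C T) (by simp [hF])
      simp only [id, Polynomial.eval_mul, Polynomial.eval_sub, Polynomial.eval_C, hp3] at h1 h2
      refine sign_weight_congr h1.symm h2.symm (redWeight_congr _ _ _ fun u hu => ?_)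
      have h3 := ht (pu u - pQ)
        (by
          rw [hF]
          exact Finset.mem_insert_of_mem (Finset.mem_insert_of_mem
            (Finset.mem_image_of_mem (fun u : (𝓞 L)ˣ => pu u - pQ) hu)))
      simp only [id, Polynomial.eval_sub, hpu2, hpQ2] at h3
      rw [mul_add, mul_add, mul_left_comm, mul_left_comm ((u : 𝓞 L) : L) ((t : ℤ) : L)]
      exact h3.symm)
    (fun t => eF (α * (s * (Algebra.norm ℚ (y + (t : L) * z) : ℝ) / N))) a b B
    (fun b' hb' => by
      have := H P α q (Polynomial.C (α * s / N) * p) a b' hP hq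
        ((Polynomial.natDegree_C_mul_le _ _).trans hp1)
        (by
          rw [Polynomial.coeff_C_mul, hp2, hm]
          push_cast
          field_simp)
        (le_trans (by
          push_cast
          have : (b' : ℝ) ≤ b := by exact_mod_cast hb'
          linarith) hab)
      refine le_trans (le_of_eq ?_) this
      congr 1
      refine Finset.sum_congr rfl fun t _ => ?_
      rw [Polynomial.eval_mul, Polynomial.eval_C, hp3]
      congr 1
      field_simp)
  refine key.trans ?_
  have : B * (1 + 2 * ((k + 2 : ℕ) : ℝ) * (F.card : ℝ)) ≤
      B * (1 + 2 * ((k + 2 : ℕ) : ℝ) * ((V.card + 2 : ℕ) : ℝ)) := by gcongr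
  refine this.trans (le_of_eq ?_)
  rw [hB]; ring

lemma sum_box_cons {k : ℕ} (S : Finset ℤ) (F : (Fin (k + 1) → ℤ) → ℂ) :
    ∑ c ∈ Fintype.piFinset (fun _ : Fin (k + 1) => S), F c =
      ∑ c ∈ Fintype.piFinset (fun _ : Fin k => S), ∑ t ∈ S, F (Fin.cons t c) := by
  rw [Finset.sum_sigma']
  refine Finset.sum_nbij' (fun c => ⟨Fin.tail c, c 0⟩) (fun p => Fin.cons p.2 p.1) ?_ ?_ ?_ ?_ ?_
  · intro c hc
    rw [Fintype.mem_piFinset] at hc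
    simp only [Finset.mem_sigma, Fintype.mem_piFinset]
    exact ⟨fun i => hc _, hc 0⟩
  · rintro ⟨c, t⟩ h
    simp only [Finset.mem_sigma, Fintype.mem_piFinset] at h
    rw [Fintype.mem_piFinset]
    intro i
    refine Fin.cases ?_ ?_ i
    · simpa using h.2
    · intro j; simpa using h.1 j
  · intro c _; simp
  · rintro ⟨c, t⟩ _; simp
  · intro c _; simp

/-- The weighted exponential sum over a box, sliced into lines parallel to `b 0`. -/
lemma box_bound (k : ℕ) (V : Finset (𝓞 L)ˣ)
    (b : Module.Basis (Fin (k + 1)) ℚ L) (N : ℝ) (hN : 0 < N) (m : ℤ)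
    (hm : (Algebra.norm ℚ (b 0) : ℝ) = m * N) (κ : ℝ) (hκ : 1 ≤ κ) :
    ∃ C : ℝ, 0 < C ∧ ∀ (P α : ℝ) (q : ℕ), 1 ≤ P → HasRatApprox α q →
      ∀ (T : ℝ) (M : ℕ), (2 * M + 1 : ℝ) ≤ κ * P →
      ‖∑ c ∈ Fintype.piFinset (fun _ : Fin (k + 1) => Finset.Ico (-M : ℤ) (M + 1)),
        if 0 < |(Algebra.norm ℚ (∑ i, (c i : L) * b i) : ℝ)| ∧
            |(Algebra.norm ℚ (∑ i, (c i : L) * b i) : ℝ)| ≤ T then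
          (redWeight V (∑ i, (c i : L) * b i) : ℂ) *
            eF (α * (|(Algebra.norm ℚ (∑ i, (c i : L) * b i) : ℝ)| / N)) else 0‖ ≤
        C * P ^ (k + 1) * (1 / q + P⁻¹ + q / P ^ (k + 1)) ^ (((10 : ℝ) ^ (k + 1))⁻¹ / 2) := by
  have hk : Module.finrank ℚ L = k + 1 := by
    rw [Module.finrank_eq_card_basis b, Fintype.card_fin]
  obtain ⟨C1, hC1, H1⟩ := line_bound k hk V (b 0) (b.ne_zero 0) N hN m hm κ hκ 1 one_ne_zero
  obtain ⟨C2, hC2, H2⟩ := line_bound k hk V (b 0) (b.ne_zero 0) N hN m hm κ hκ (-1) (by decide)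
  refine ⟨κ ^ k * (C1 + C2), by positivity, fun P α q hP hq T M hM => ?_⟩
  rw [sum_box_cons]
  set D := (1 / (q : ℝ) + P⁻¹ + q / P ^ (k + 1)) ^ (((10 : ℝ) ^ (k + 1))⁻¹ / 2) with hD
  have hD0 : 0 ≤ D := by rw [hD]; positivity
  have hline : ∀ c ∈ Fintype.piFinset (fun _ : Fin k => Finset.Ico (-M : ℤ) (M + 1)),
      ‖∑ t ∈ Finset.Ico (-M : ℤ) (M + 1),
        if 0 < |(Algebra.norm ℚ (∑ i, ((Fin.cons t c : Fin (k + 1) → ℤ) i : L) * b i) : ℝ)| ∧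
            |(Algebra.norm ℚ (∑ i, ((Fin.cons t c : Fin (k + 1) → ℤ) i : L) * b i) : ℝ)| ≤ T then
          (redWeight V (∑ i, ((Fin.cons t c : Fin (k + 1) → ℤ) i : L) * b i) : ℂ) *
            eF (α * (|(Algebra.norm ℚ (∑ i, ((Fin.cons t c : Fin (k + 1) → ℤ) i : L) * b i) : ℝ)| / N))
            else 0‖ ≤ (C1 + C2) * P * D := by
    intro c _
    set y : L := ∑ i : Fin k, (c i : L) * b i.succ with hy
    have hx : ∀ t : ℤ, ∑ i, ((Fin.cons t c : Fin (k + 1) → ℤ) i : L) * b i = y + (t : L) * b 0 := by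
      intro t
      rw [Fin.sum_univ_succ]
      simp [hy, add_comm]
    have hlen : (((M + 1 : ℤ) - (-M : ℤ) : ℤ) : ℝ) ≤ κ * P := by
      push_cast; linarith
    have h1 := H1 P α q hP hq y T (-M) (M + 1) hlen
    have h2 := H2 P α q hP hq y T (-M) (M + 1) hlen
    have e : ∀ t : ℤ, (if 0 < |(Algebra.norm ℚ (y + (t : L) * b 0) : ℝ)| ∧
            |(Algebra.norm ℚ (y + (t : L) * b 0) : ℝ)| ≤ T then
          (redWeight V (y + (t : L) * b 0) : ℂ) *
            eF (α * (|(Algebra.norm ℚ (y + (t : L) * b 0) : ℝ)| / N)) else 0) =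
        ((if 0 < ((1 : ℤ) : ℝ) * (Algebra.norm ℚ (y + (t : L) * b 0) : ℝ) ∧
          ((1 : ℤ) : ℝ) * (Algebra.norm ℚ (y + (t : L) * b 0) : ℝ) ≤ T then
          redWeight V (y + (t : L) * b 0) else 0 : ℝ) : ℂ) *
          eF (α * (((1 : ℤ) : ℝ) * (Algebra.norm ℚ (y + (t : L) * b 0) : ℝ) / N)) +
        ((if 0 < ((-1 : ℤ) : ℝ) * (Algebra.norm ℚ (y + (t : L) * b 0) : ℝ) ∧
          ((-1 : ℤ) : ℝ) * (Algebra.norm ℚ (y + (t : L) * b 0) : ℝ) ≤ T then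
          redWeight V (y + (t : L) * b 0) else 0 : ℝ) : ℂ) *
          eF (α * (((-1 : ℤ) : ℝ) * (Algebra.norm ℚ (y + (t : L) * b 0) : ℝ) / N)) := by
      intro t
      set n : ℝ := (Algebra.norm ℚ (y + (t : L) * b 0) : ℝ) with hn
      rcases lt_trichotomy n 0 with h | h | h
      · have e1 : ¬ (0 < ((1 : ℤ) : ℝ) * n ∧ ((1 : ℤ) : ℝ) * n ≤ T) := by
          push_cast; intro h'; linarith [h'.1]
        rw [if_neg e1, abs_of_neg h]
        push_cast
        simp only [neg_mul, one_mul, zero_mul, zero_add]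
        split_ifs <;> simp
      · simp [h]
      · have e1 : ¬ (0 < ((-1 : ℤ) : ℝ) * n ∧ ((-1 : ℤ) : ℝ) * n ≤ T) := by
          push_cast; intro h'; linarith [h'.1]
        rw [if_neg e1, abs_of_pos h]
        push_cast
        simp only [one_mul, zero_mul, add_zero]
        split_ifs <;> simp
    simp only [hx, e]
    rw [Finset.sum_add_distrib]
    refine (norm_add_le _ _).trans ((add_le_add h1 h2).trans (le_of_eq ?_))
    rw [hD]; ring
  refine (norm_sum_le _ _).trans ((Finset.sum_le_sum hline).trans ?_)
  rw [Finset.sum_const, Fintype.card_piFinset_const, Int.card_Ico, nsmul_eq_mul]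
  have hc : (((((M : ℤ) + 1 - -(M : ℤ)).toNat ^ Fintype.card (Fin k) : ℕ)) : ℝ) ≤ (κ * P) ^ k := by
    rw [Fintype.card_fin]
    have : ((M : ℤ) + 1 - -(M : ℤ)).toNat = 2 * M + 1 := by omega
    rw [this]
    push_cast
    gcongr
  calc _ ≤ (κ * P) ^ k * ((C1 + C2) * P * D) := by gcongr; simpa using hc
    _ = _ := by ring
end

/-! ### Sums over an ideal class -/

section
variable {L : Type*} [Field L] [NumberField L]

lemma abs_norm_eq_absNorm_span (x : 𝓞 L) :
    |(Algebra.norm ℚ (x : L) : ℝ)| = (Ideal.absNorm (Ideal.span {x}) : ℝ) := by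
  rw [Ideal.absNorm_span_singleton, Nat.cast_natAbs, Int.cast_abs]
  congr 1
  have : (Algebra.norm ℚ (x : L)) = ((Algebra.norm ℤ x : ℤ) : ℚ) := by
    rw [RingOfIntegers.coe_eq_algebraMap, ← Algebra.coe_norm_int]
  rw [this]; simp

lemma exists_unit_of_span_eq {x y : 𝓞 L} (h : Ideal.span {y} = Ideal.span {x}) :
    ∃ u : (𝓞 L)ˣ, (y : L) = ((u : 𝓞 L) : L) * (x : L) := by
  rw [Ideal.span_singleton_eq_span_singleton] at h
  obtain ⟨u, hu⟩ := h.symm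
  exact ⟨u, by rw [← hu, mul_comm]; simp⟩

lemma span_unit_mul (u : (𝓞 L)ˣ) (x : 𝓞 L) :
    Ideal.span {(u : 𝓞 L) * x} = Ideal.span {x} := by
  rw [Ideal.span_singleton_eq_span_singleton]
  exact ⟨u⁻¹, by rw [mul_comm, ← mul_assoc]; simp⟩

/-- The ideals of a given class `cls` and norm at most `Y`. -/
noncomputable def classIdeals (cls : ClassGroup (𝓞 L)) (Y : ℝ) : Set (Ideal (𝓞 L)) :=
  {I | (Ideal.absNorm I : ℝ) ≤ Y ∧ ∃ h : I ≠ ⊥,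
    ClassGroup.mk0 ⟨I, mem_nonZeroDivisors_of_ne_zero h⟩ = cls}

lemma finite_ideals_le (Y : ℝ) : {I : Ideal (𝓞 L) | (Ideal.absNorm I : ℝ) ≤ Y}.Finite := by
  refine (Ideal.finite_setOfPred_absNorm_le (S := 𝓞 L) ⌊Y⌋₊).subset fun I hI => ?_
  exact Nat.le_floor hI

lemma classIdeals_finite (cls : ClassGroup (𝓞 L)) (Y : ℝ) : (classIdeals cls Y).Finite :=
  (finite_ideals_le Y).subset fun _ hI => hI.1

lemma mk0_eq_iff_exists_span (cls : ClassGroup (𝓞 L)) (J : Ideal (𝓞 L))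
    (hJ : J ∈ nonZeroDivisors (Ideal (𝓞 L))) (hJc : ClassGroup.mk0 ⟨J, hJ⟩ = cls⁻¹)
    (I : Ideal (𝓞 L)) (hI : I ≠ ⊥) :
    ClassGroup.mk0 ⟨I, mem_nonZeroDivisors_of_ne_zero hI⟩ = cls ↔
      ∃ x : 𝓞 L, Ideal.span {x} = I * J := by
  have hI' := mem_nonZeroDivisors_of_ne_zero hI
  have h : ClassGroup.mk0 ⟨I, hI'⟩ = cls ↔ (I * J).IsPrincipal := by
    rw [← ClassGroup.mk0_eq_one_iff (mul_mem hI' hJ)]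
    rw [show (⟨I * J, mul_mem hI' hJ⟩ : nonZeroDivisors (Ideal (𝓞 L))) = ⟨I, hI'⟩ * ⟨J, hJ⟩ from rfl,
      map_mul, hJc, mul_inv_eq_one]
  rw [h]
  constructor
  · rintro ⟨x, hx⟩
    exact ⟨x, hx.symm⟩
  · rintro ⟨x, hx⟩
    exact ⟨x, hx.symm⟩

/-- The exponential sum over one ideal class. With `J` in the inverse class, `I ↦ I * J` identifies the
ideals of the class with the nonzero principal ideals contained in `J`, hence with the nonzero
elements of `J` up to units, and `N I = |N x| / N J`. The unit ambiguity is removed by `redWeight`,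
whose support in norm at most `Y * N J` lies in a box of side `O(P)`. -/
lemma class_sum_bound (k : ℕ) (hk : Module.finrank ℚ L = k + 1) (cls : ClassGroup (𝓞 L)) :
    ∃ C : ℝ, 0 < C ∧ ∀ (P α : ℝ) (q : ℕ), 1 ≤ P → HasRatApprox α q →
      ∀ Y : ℝ, Y ≤ P ^ (k + 1) →
      ‖∑ I ∈ (classIdeals_finite cls Y).toFinset, eF (α * (Ideal.absNorm I : ℝ))‖ ≤
        C * P ^ (k + 1) * (1 / q + P⁻¹ + q / P ^ (k + 1)) ^ (((10 : ℝ) ^ (k + 1))⁻¹ / 2) := by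
  obtain ⟨⟨J, hJ⟩, hJc⟩ := ClassGroup.mk0_surjective (R := 𝓞 L) cls⁻¹
  have hJ0 : J ≠ ⊥ := nonZeroDivisors.ne_zero hJ
  obtain ⟨b, hb1, hb2⟩ := exists_ideal_basis J hJ0 k hk
  choose X hXJ hX using hb1
  obtain ⟨C1, V, hC1, hV⟩ := exists_reduction_units (L := L)
  obtain ⟨C2, hC2, hcoord⟩ := exists_coord_bound b
  set n : ℝ := (Ideal.absNorm J : ℝ) with hn
  have hn1 : 1 ≤ n := by
    rw [hn]
    exact_mod_cast Nat.one_le_iff_ne_zero.mpr (fun h => hJ0 (Ideal.absNorm_eq_zero_iff.mp h))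
  have hn0 : 0 < n := by linarith
  -- `J` divides `(b 0)`, so the leading coefficient is an integer multiple of `N(J)`
  obtain ⟨m, hm⟩ : ∃ m : ℤ, (Algebra.norm ℚ (b 0) : ℝ) = m * n := by
    have e : (X (Pi.single 0 1) : L) = b 0 := by
      rw [hX, Finset.sum_eq_single 0]
      · simp
      · intro i _ hi; simp [hi]
      · simp
    have hdvd : Ideal.absNorm J ∣ Ideal.absNorm (Ideal.span {X (Pi.single 0 1)}) :=
      Ideal.absNorm_dvd_absNorm_of_le ((Ideal.span_singleton_le_iff_mem _).mpr (hXJ _))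
    obtain ⟨r, hr⟩ := hdvd
    have h1 := abs_norm_eq_absNorm_span (X (Pi.single 0 1))
    rw [e, hr] at h1
    push_cast at h1
    rcases abs_choice (Algebra.norm ℚ (b 0) : ℝ) with h | h
    · exact ⟨r, by rw [← h, h1]; push_cast; ring⟩
    · exact ⟨-r, by rw [h] at h1; push_cast; linarith⟩
  set κ₁ : ℝ := C2 * (Real.sqrt C1 * n) with hκ₁
  have hκ₁0 : 0 ≤ κ₁ := by rw [hκ₁]; positivity
  obtain ⟨C, hC, H⟩ := box_bound k V b n hn0 m hm (2 * κ₁ + 1) (by linarith)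
  refine ⟨C, hC, fun P α q hP hq Y hY => ?_⟩
  have hP0 : 0 < P := by linarith
  set M : ℕ := ⌊κ₁ * P⌋₊ with hM
  have hMle : (M : ℝ) ≤ κ₁ * P := Nat.floor_le (by positivity)
  have hfin := H P α q hP hq (Y * n) M (by nlinarith)
  set box := Fintype.piFinset (fun _ : Fin (k + 1) => Finset.Ico (-M : ℤ) (M + 1)) with hbox
  -- reduced elements of `J` of norm at most `Y * N(J)` have coordinates in the box
  have hred : ∀ x : 𝓞 L, x ∈ J → x ≠ 0 →
      (∀ u ∈ V, embNormSq (x : L) ≤ embNormSq (((u : 𝓞 L) : L) * (x : L))) →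
      |(Algebra.norm ℚ (x : L) : ℝ)| ≤ Y * n → ∃ c ∈ box, X c = x := by
    intro x hxJ hx0 hxr hxN
    obtain ⟨c, hc⟩ := hb2 x hxJ
    refine ⟨c, ?_, ?_⟩
    · have hx0' : (x : L) ≠ 0 := by simpa using hx0
      have h1 := embNormSq_pow_le ((hV (x : L) hx0' hxr).1)
      rw [hk] at h1
      have h2 : (Algebra.norm ℚ (x : L) : ℝ) ^ 2 ≤ (n ^ 2 * P ^ 2) ^ (k + 1) := by
        rw [← sq_abs]
        calc |(Algebra.norm ℚ (x : L) : ℝ)| ^ 2 ≤ (P ^ (k + 1) * n) ^ 2 := by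
              gcongr
              exact hxN.trans (by gcongr)
          _ ≤ (P ^ (k + 1) * n ^ (k + 1)) ^ 2 := by
              gcongr
              exact le_self_pow₀ hn1 (by omega)
          _ = _ := by ring
      have h3 : embNormSq (x : L) ^ (k + 1) ≤ (C1 * (n ^ 2 * P ^ 2)) ^ (k + 1) := by
        rw [mul_pow]
        exact h1.trans (by gcongr)
      have h4 : embNormSq (x : L) ≤ C1 * (n ^ 2 * P ^ 2) :=
        le_of_pow_le_pow_left₀ (by omega) (by positivity) h3
      have h5 : Real.sqrt (embNormSq (x : L)) ≤ Real.sqrt C1 * n * P := by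
        rw [Real.sqrt_le_left (by positivity)]
        refine h4.trans (le_of_eq ?_)
        rw [mul_pow, mul_pow, Real.sq_sqrt hC1.le]; ring
      rw [hbox, Fintype.mem_piFinset]
      intro i
      have h6 := hcoord c i
      rw [← hc] at h6
      have h7 : |(c i : ℝ)| ≤ κ₁ * P := by
        refine h6.trans ?_
        rw [hκ₁, mul_assoc]
        gcongr
      have h8 : (c i).natAbs ≤ M := by
        rw [hM]
        refine Nat.le_floor ?_
        rwa [Nat.cast_natAbs, Int.cast_abs]
      rw [Finset.mem_Ico]
      omega
    · exact RingOfIntegers.ext (by rw [hX, ← hc])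
  have hXinj : Function.Injective X := by
    intro c c' h
    have h1 : ∑ i, (c i : ℚ) • b i = ∑ i, (c' i : ℚ) • b i := by
      have := hX c
      rw [h, hX c'] at this
      simpa [Algebra.smul_def] using this.symm
    funext i
    have h2 := congrArg (fun x => b.repr x i) h1
    simp only [Module.Basis.repr_sum_self] at h2
    exact_mod_cast h2
  set 𝓘 := (classIdeals_finite cls Y).toFinset with h𝓘
  have hmem : ∀ I, I ∈ 𝓘 ↔ (Ideal.absNorm I : ℝ) ≤ Y ∧ ∃ h : I ≠ ⊥,
      ClassGroup.mk0 ⟨I, mem_nonZeroDivisors_of_ne_zero h⟩ = cls := by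
    intro I
    rw [h𝓘, Set.Finite.mem_toFinset]; rfl
  have hclass : ∀ I, ∀ h : I ≠ ⊥, ∀ x : 𝓞 L, Ideal.span {x} = I * J →
      ClassGroup.mk0 ⟨I, mem_nonZeroDivisors_of_ne_zero h⟩ = cls := fun I h x hx =>
    (mk0_eq_iff_exists_span cls J hJ hJc I h).mpr ⟨x, hx⟩
  have hprinc : ∀ I ∈ 𝓘, ∃ x : 𝓞 L, Ideal.span {x} = I * J := fun I hI => by
    obtain ⟨-, h, hc⟩ := (hmem I).mp hI
    exact (mk0_eq_iff_exists_span cls J hJ hJc I h).mp hc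
  have hnormIJ : ∀ I, ∀ x : 𝓞 L, Ideal.span {x} = I * J →
      |(Algebra.norm ℚ (x : L) : ℝ)| = (Ideal.absNorm I : ℝ) * n := by
    intro I x hx
    rw [abs_norm_eq_absNorm_span, hx, map_mul, Nat.cast_mul]
  -- the generators of `I * J` in the box have total weight `1`
  have hone : ∀ I ∈ 𝓘, ∑ c ∈ box, (if Ideal.span {X c} = I * J then redWeight V (X c : L) else 0)
      = 1 := by
    intro I hI
    obtain ⟨x, hx⟩ := hprinc I hI
    obtain ⟨hIY, hI0, hIc⟩ := (hmem I).mp hI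
    have hx0 : x ≠ 0 := by
      rintro rfl
      rw [Ideal.span_singleton_eq_bot.mpr rfl] at hx
      exact mul_ne_zero hI0 hJ0 hx.symm
    have hx0' : (x : L) ≠ 0 := by simpa using hx0
    have h1 := sum_redWeight_eq_one V (fun x hx h => (hV x hx h).2) (x : L) hx0'
      ((box.filter fun c => Ideal.span {X c} = I * J).image fun c => (X c : L)) ?_ ?_
    · rw [Finset.sum_image] at h1
      · rw [← h1, Finset.sum_filter]
      · intro c _ c' _ h
        exact hXinj (RingOfIntegers.ext h)
    · intro y hy
      obtain ⟨c, hc, rfl⟩ := Finset.mem_image.mp hy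
      exact exists_unit_of_span_eq (((Finset.mem_filter.mp hc).2).trans hx.symm)
    · intro u hu
      have hspan : Ideal.span {(u : 𝓞 L) * x} = I * J := by rw [span_unit_mul, hx]
      have hxJ : (u : 𝓞 L) * x ∈ J := by
        refine J.mul_mem_left _ ((Ideal.mul_le_right : I * J ≤ J) ?_)
        rw [← hx]; exact Ideal.mem_span_singleton_self x
      obtain ⟨c, hcb, hc⟩ := hred ((u : 𝓞 L) * x) hxJ (mul_ne_zero (Units.ne_zero u) hx0)
        (by simpa using hu) (by rw [hnormIJ I _ hspan]; gcongr)
      refine Finset.mem_image.mpr ⟨c, Finset.mem_filter.mpr ⟨hcb, by rw [hc, hspan]⟩, ?_⟩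
      rw [hc]; simp
  -- each point of the box comes from exactly one ideal, of the given class
  have hperc : ∀ c : Fin (k + 1) → ℤ, ∀ w : ℂ,
      ∑ I ∈ 𝓘, (if Ideal.span {X c} = I * J then w else 0) =
        if 0 < |(Algebra.norm ℚ (X c : L) : ℝ)| ∧ |(Algebra.norm ℚ (X c : L) : ℝ)| ≤ Y * n
          then w else 0 := by
    intro c w
    obtain ⟨I₀, hI₀⟩ : ∃ I₀, Ideal.span {X c} = I₀ * J := by
      obtain ⟨I₀, h⟩ := Ideal.dvd_iff_le.mpr ((Ideal.span_singleton_le_iff_mem _).mpr (hXJ c))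
      exact ⟨I₀, by rw [h, mul_comm]⟩
    have h1 : ∀ I, (Ideal.span {X c} = I * J ↔ I₀ = I) := fun I => by
      rw [hI₀]; exact mul_left_inj' hJ0
    simp only [h1]
    rw [Finset.sum_ite_eq, hnormIJ I₀ _ hI₀]
    refine if_congr ?_ rfl rfl
    rw [hmem, mul_le_mul_iff_left₀ hn0, mul_pos_iff_of_pos_right hn0, Nat.cast_pos,
      Nat.pos_iff_ne_zero, show Ideal.absNorm I₀ ≠ 0 ↔ I₀ ≠ ⊥ from Ideal.absNorm_eq_zero_iff.not]
    constructor
    · rintro ⟨h2, h3, -⟩; exact ⟨h3, h2⟩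
    · rintro ⟨h3, h2⟩; exact ⟨h2, h3, hclass I₀ h3 _ hI₀⟩
  have hcount : ∑ I ∈ 𝓘, eF (α * (Ideal.absNorm I : ℝ)) =
      ∑ c ∈ box, if 0 < |(Algebra.norm ℚ (∑ i, (c i : L) * b i) : ℝ)| ∧
            |(Algebra.norm ℚ (∑ i, (c i : L) * b i) : ℝ)| ≤ Y * n then
          (redWeight V (∑ i, (c i : L) * b i) : ℂ) *
            eF (α * (|(Algebra.norm ℚ (∑ i, (c i : L) * b i) : ℝ)| / n)) else 0 := by
    calc ∑ I ∈ 𝓘, eF (α * (Ideal.absNorm I : ℝ))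
        = ∑ I ∈ 𝓘, ∑ c ∈ box, (if Ideal.span {X c} = I * J then
            (redWeight V (X c : L) : ℂ) * eF (α * (|(Algebra.norm ℚ (X c : L) : ℝ)| / n)) else 0) := by
          refine Finset.sum_congr rfl fun I hI => ?_
          have h1 : (1 : ℂ) = ∑ c ∈ box,
              (if Ideal.span {X c} = I * J then (redWeight V (X c : L) : ℂ) else 0) := by
            have := congrArg (fun r : ℝ => (r : ℂ)) (hone I hI)
            push_cast at this
            rw [← this]
            exact Finset.sum_congr rfl fun c _ => by split_ifs <;> simp
          rw [← one_mul (eF _), h1, Finset.sum_mul]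
          refine Finset.sum_congr rfl fun c _ => ?_
          split_ifs with h
          · rw [hnormIJ I _ h, mul_div_cancel_right₀ _ hn0.ne']
          · simp
      _ = _ := by
          rw [Finset.sum_comm]
          refine Finset.sum_congr rfl fun c _ => ?_
          rw [hperc, hX]
  rw [hcount]
  exact hfin
end

/-! ### Sums over all ideals and the logarithm -/

section
variable {L : Type*} [Field L] [NumberField L]

lemma nonzeroIdeals_finite (Y : ℝ) :
    {I : Ideal (𝓞 L) | I ≠ ⊥ ∧ (Ideal.absNorm I : ℝ) ≤ Y}.Finite :=
  (finite_ideals_le Y).subset fun _ hI => hI.2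

lemma ideal_sum_bound (k : ℕ) (hk : Module.finrank ℚ L = k + 1) :
    ∃ C : ℝ, 0 < C ∧ ∀ (P α : ℝ) (q : ℕ), 1 ≤ P → HasRatApprox α q →
      ∀ Y : ℝ, Y ≤ P ^ (k + 1) →
      ‖∑ I ∈ (nonzeroIdeals_finite (L := L) Y).toFinset, eF (α * (Ideal.absNorm I : ℝ))‖ ≤
        C * P ^ (k + 1) * (1 / q + P⁻¹ + q / P ^ (k + 1)) ^ (((10 : ℝ) ^ (k + 1))⁻¹ / 2) := by
  choose C hC H using fun cls : ClassGroup (𝓞 L) => class_sum_bound k hk cls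
  refine ⟨∑ cls, C cls, Finset.sum_pos (fun c _ => hC c) ⟨1, Finset.mem_univ _⟩,
    fun P α q hP hq Y hY => ?_⟩
  set cl : Ideal (𝓞 L) → ClassGroup (𝓞 L) := fun I =>
    if h : I ≠ ⊥ then ClassGroup.mk0 ⟨I, mem_nonZeroDivisors_of_ne_zero h⟩ else 1 with hcl
  rw [← Finset.sum_fiberwise _ cl, Finset.sum_mul, Finset.sum_mul]
  refine (norm_sum_le _ _).trans (Finset.sum_le_sum fun c _ => ?_)
  refine le_trans (le_of_eq ?_) (H c P α q hP hq Y hY)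
  congr 2
  ext I
  rw [Finset.mem_filter, Set.Finite.mem_toFinset, Set.Finite.mem_toFinset]
  change (I ≠ ⊥ ∧ _) ∧ cl I = c ↔ _ ∧ ∃ h : I ≠ ⊥, _
  constructor
  · rintro ⟨⟨h1, h2⟩, h3⟩
    exact ⟨h2, h1, by rw [← h3, hcl]; simp only [dif_pos h1]⟩
  · rintro ⟨h2, h1, h3⟩
    exact ⟨⟨h1, h2⟩, by rw [← h3, hcl]; simp only [dif_pos h1]⟩

/-- Partial summation over the value of the norm: a bound `B` uniform in the cutoff `Y ≤ X` survives the
insertion of the logarithm at the cost of a factor `4 * log X`. -/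
lemma log_ideal_sum_bound (X : ℝ) (hX : 2 ≤ X) (α B : ℝ)
    (hB : ∀ Y ≤ X, ‖∑ I ∈ (nonzeroIdeals_finite (L := L) Y).toFinset,
      eF (α * (Ideal.absNorm I : ℝ))‖ ≤ B) :
    ‖∑ I ∈ (nonzeroIdeals_finite (L := L) X).toFinset,
      (Real.log (Ideal.absNorm I) : ℂ) * eF (α * (Ideal.absNorm I : ℝ))‖ ≤
      4 * B * Real.log X := by
  set S := (nonzeroIdeals_finite (L := L) X).toFinset with hS
  have hX0 : 0 ≤ X := by linarith
  have hmem : ∀ I, I ∈ S ↔ I ≠ ⊥ ∧ (Ideal.absNorm I : ℝ) ≤ X := fun I => by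
    rw [hS, Set.Finite.mem_toFinset]; rfl
  have hB0 : 0 ≤ B := (norm_nonneg _).trans (hB X le_rfl)
  set n := ⌊X⌋₊ + 1 with hn
  set z : ℕ → ℂ := fun j => ∑ I ∈ S with Ideal.absNorm I = j, eF (α * (Ideal.absNorm I : ℝ)) with hz
  have hmaps : ∀ I ∈ S, Ideal.absNorm I ∈ Finset.range n := by
    intro I hI
    rw [Finset.mem_range, hn, Nat.lt_succ_iff]
    exact Nat.le_floor ((hmem I).mp hI).2
  have hsum : ∑ I ∈ S, (Real.log (Ideal.absNorm I) : ℂ) * eF (α * (Ideal.absNorm I : ℝ)) =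
      ∑ i ∈ Finset.range n, ((Real.log i : ℝ) : ℂ) * z i := by
    rw [← Finset.sum_fiberwise_of_maps_to hmaps]
    refine Finset.sum_congr rfl fun i _ => ?_
    rw [hz, Finset.mul_sum]
    refine Finset.sum_congr rfl fun I hI => ?_
    rw [(Finset.mem_filter.mp hI).2]
  have hpart : ∀ j ≤ n, ‖∑ i ∈ Finset.range j, z i‖ ≤ B := by
    intro j hj
    have e : ∑ i ∈ Finset.range j, z i =
        ∑ I ∈ (nonzeroIdeals_finite (L := L) ((j : ℝ) - 1)).toFinset,
          eF (α * (Ideal.absNorm I : ℝ)) := by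
      have hfl : (⌊X⌋₊ : ℝ) ≤ X := Nat.floor_le hX0
      have hj' : (j : ℝ) ≤ ⌊X⌋₊ + 1 := by exact_mod_cast hj
      have hmaps' : ∀ I ∈ (nonzeroIdeals_finite (L := L) ((j : ℝ) - 1)).toFinset,
          Ideal.absNorm I ∈ Finset.range j := by
        intro I hI
        rw [Set.Finite.mem_toFinset] at hI
        have h2 : (Ideal.absNorm I : ℝ) ≤ j - 1 := hI.2
        rw [Finset.mem_range]
        have : (Ideal.absNorm I : ℝ) < j := by linarith
        exact_mod_cast this
      rw [← Finset.sum_fiberwise_of_maps_to hmaps']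
      refine Finset.sum_congr rfl fun i hi => ?_
      rw [hz]
      refine Finset.sum_congr ?_ fun _ _ => rfl
      ext I
      rw [Finset.mem_filter, Finset.mem_filter, hmem, Set.Finite.mem_toFinset]
      change _ ↔ (I ≠ ⊥ ∧ (Ideal.absNorm I : ℝ) ≤ j - 1) ∧ _
      have hi' : (i : ℝ) + 1 ≤ j := by exact_mod_cast Finset.mem_range.mp hi
      constructor
      · rintro ⟨⟨h1, -⟩, h3⟩
        exact ⟨⟨h1, by rw [h3]; linarith⟩, h3⟩
      · rintro ⟨⟨h1, -⟩, h3⟩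
        exact ⟨⟨h1, by rw [h3]; linarith⟩, h3⟩
    rw [e]
    refine hB _ ?_
    have hfl : (⌊X⌋₊ : ℝ) ≤ X := Nat.floor_le hX0
    have hj' : (j : ℝ) ≤ ⌊X⌋₊ + 1 := by exact_mod_cast hj
    linarith
  rw [hsum]
  refine (abel_bound (fun i : ℕ => Real.log i) z n B hpart).trans ?_
  have hmono : ∀ i : ℕ, Real.log (i : ℝ) ≤ Real.log ((i + 1 : ℕ) : ℝ) := by
    intro i
    rcases Nat.eq_zero_or_pos i with rfl | hi
    · simp
    · exact Real.log_le_log (by exact_mod_cast hi) (by push_cast; linarith)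
  have htel : ∑ i ∈ Finset.range n, |Real.log ((i + 1 : ℕ) : ℝ) - Real.log (i : ℝ)| =
      Real.log n := by
    rw [Finset.sum_congr rfl fun i _ => abs_of_nonneg (sub_nonneg.mpr (hmono i)),
      Finset.sum_range_sub (fun i : ℕ => Real.log i)]
    simp
  rw [htel]
  have hlogn0 : 0 ≤ Real.log n := Real.log_natCast_nonneg n
  have hlogn : Real.log n ≤ 2 * Real.log X := by
    have h1 : (n : ℝ) ≤ X ^ 2 := by
      have hfl : (⌊X⌋₊ : ℝ) ≤ X := Nat.floor_le hX0
      rw [hn]; push_cast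
      nlinarith
    calc Real.log n ≤ Real.log (X ^ 2) := Real.log_le_log (by rw [hn]; positivity) h1
      _ = 2 * Real.log X := by rw [Real.log_pow]; norm_num
  rw [abs_of_nonneg hlogn0]
  nlinarith
end

/-- For a fixed number field `L` of degree `d` there is a constant depending only on `L`
such that for all `X ≥ 2` and all real `α` with a rational approximation of denominator `q`:
`|Σ_{N(𝔞) ≤ X} log(N(𝔞))·e(α·N(𝔞))| = O(X·log X·(1/q + X^{−1/d} + q/X)^{10^{−d}/2})`,
the sum over nonzero ideals of `𝓞 L` of norm at most `X`. -/
theorem ideal_log_exp_sum_bound (L : Type*) [Field L] [NumberField L]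
    (d : ℕ) (hd : d = Module.finrank ℚ L) :
    ∃ Cst : ℝ, 0 < Cst ∧ ∀ X : ℝ, 2 ≤ X → ∀ (α : ℝ) (q : ℕ), HasRatApprox α q →
      ‖∑ᶠ I : Ideal (𝓞 L),
          if I ≠ ⊥ ∧ (Ideal.absNorm I : ℝ) ≤ X then
            (Real.log (Ideal.absNorm I) : ℂ) * eF (α * (Ideal.absNorm I : ℝ))
          else 0‖
        ≤ Cst * X * Real.log X *
            ((1 / q + X ^ (-(1 : ℝ) / d) + q / X) ^ (((10 : ℝ) ^ d)⁻¹ / 2)) := by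
  obtain ⟨k, rfl⟩ : ∃ k, d = k + 1 :=
    ⟨d - 1, by have := Module.finrank_pos (R := ℚ) (M := L); omega⟩
  obtain ⟨C, hC, H⟩ := ideal_sum_bound k hd.symm
  refine ⟨4 * C, by positivity, fun X hX α q hq => ?_⟩
  have hX0 : 0 ≤ X := by linarith
  -- the box of elements of norm `O(X)` has side `P = X ^ (1 / d)`
  set P := X ^ (1 / ((k + 1 : ℕ) : ℝ)) with hP
  have hP1 : 1 ≤ P := Real.one_le_rpow (by linarith) (by positivity)
  have hPpow : P ^ (k + 1) = X := by
    rw [hP, one_div]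
    exact Real.rpow_inv_natCast_pow hX0 (by omega)
  have hPinv : P⁻¹ = X ^ (-(1 : ℝ) / ((k + 1 : ℕ) : ℝ)) := by
    rw [hP, neg_div, Real.rpow_neg hX0]
  have h := log_ideal_sum_bound (L := L) X hX α _ fun Y hY =>
    H P α q hP1 hq Y (by rwa [hPpow])
  rw [hPpow, hPinv] at h
  have e : (∑ᶠ I : Ideal (𝓞 L), if I ≠ ⊥ ∧ (Ideal.absNorm I : ℝ) ≤ X then
            (Real.log (Ideal.absNorm I) : ℂ) * eF (α * (Ideal.absNorm I : ℝ)) else 0) =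
      ∑ I ∈ (nonzeroIdeals_finite (L := L) X).toFinset,
      (Real.log (Ideal.absNorm I) : ℂ) * eF (α * (Ideal.absNorm I : ℝ)) := by
    rw [finsum_eq_sum_of_support_subset (s := (nonzeroIdeals_finite (L := L) X).toFinset)]
    · refine Finset.sum_congr rfl fun I hI => ?_
      rw [Set.Finite.mem_toFinset] at hI
      exact if_pos hI
    · intro I hI
      rw [Function.mem_support, ne_eq, ite_eq_right_iff, Classical.not_imp] at hI
      simpa using hI.1
  rw [e]
  refine h.trans (le_of_eq ?_)
  ring
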